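/- Let G be a connected graph of order n ≥ 4 with minimum degree δ(G) ≥ 2 that is not isomorphic to the 5-cycle C5. If 2·γnt(G) = n, then G is isomorphic to one of the following five graphs: B1 = the 4-cycle C4; B2 = the graph on six vertices consisting of a 5-cycle v1v2v3v4v5v1 together with a sixth vertex u adjacent exactly to v2 and v5; B3 = the 8-cycle C8; B4 = the graph obtained from an 8-cycle v1v2...v8v1 by adding the chord v1v5; B5 = the graph obtained from an 8-cycle v1v2...v8v1 by adding the two chords v1v5 and v2v6. -/

import Mathlib

open SimpleGraph

variable {V : Type*}

/-- The open neighborhood `N(S)` of a set `S` of vertices: all vertices having a neighbor in `S`. -/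
def openNbhd (G : SimpleGraph V) (S : Set V) : Set V := {v | ∃ u ∈ S, G.Adj u v}

/-- `S` is a dominating set: every vertex not in `S` has a neighbor in `S`. -/
def IsDomSet (G : SimpleGraph V) (S : Set V) : Prop := ∀ v ∉ S, ∃ u ∈ S, G.Adj u v

/-- `S` is a total dominating set: every vertex has a neighbor in `S`. -/
def IsTotalDomSet (G : SimpleGraph V) (S : Set V) : Prop := ∀ v, ∃ u ∈ S, G.Adj u v

/-- `S` is a neighborhood total dominating set: a dominating set such that the subgraph
induced by the open neighborhood `N(S)` has no isolated vertex. -/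
def IsNTDSet (G : SimpleGraph V) (S : Set V) : Prop :=
  IsDomSet G S ∧ ∀ v ∈ openNbhd G S, ∃ u ∈ openNbhd G S, G.Adj v u

/-- The domination number `γ(G)`. -/
noncomputable def domNum (G : SimpleGraph V) : ℕ :=
  sInf {n | ∃ S : Set V, IsDomSet G S ∧ S.ncard = n}

/-- The total domination number `γt(G)`. -/
noncomputable def totalDomNum (G : SimpleGraph V) : ℕ :=
  sInf {n | ∃ S : Set V, IsTotalDomSet G S ∧ S.ncard = n}

/-- The neighborhood total domination number `γnt(G)`. -/
noncomputable def ntdNum (G : SimpleGraph V) : ℕ :=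
  sInf {n | ∃ S : Set V, IsNTDSet G S ∧ S.ncard = n}

/-- The graph `B2`: a 5-cycle `v1 v2 v3 v4 v5 v1` (vertices `0,1,2,3,4`) together with a sixth
vertex `u = 5` adjacent exactly to `v2 = 1` and `v5 = 4`. -/
def graphB2 : SimpleGraph (Fin 6) :=
  SimpleGraph.fromRel (fun a b =>
    (a = 0 ∧ b = 1) ∨ (a = 1 ∧ b = 2) ∨ (a = 2 ∧ b = 3) ∨ (a = 3 ∧ b = 4) ∨
    (a = 4 ∧ b = 0) ∨ (a = 5 ∧ b = 1) ∨ (a = 5 ∧ b = 4))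

/-- The graph `B4`: an 8-cycle `v1 v2 ... v8 v1` (vertices `0,...,7`) together with the chord
`v1 v5 = {0, 4}`. -/
def graphB4 : SimpleGraph (Fin 8) :=
  SimpleGraph.fromRel (fun a b => (SimpleGraph.cycleGraph 8).Adj a b ∨ (a = 0 ∧ b = 4))

/-- The graph `B5`: an 8-cycle `v1 v2 ... v8 v1` (vertices `0,...,7`) together with the two
chords `v1 v5 = {0, 4}` and `v2 v6 = {1, 5}`. -/
def graphB5 : SimpleGraph (Fin 8) :=
  SimpleGraph.fromRel (fun a b =>
    (SimpleGraph.cycleGraph 8).Adj a b ∨ (a = 0 ∧ b = 4) ∨ (a = 1 ∧ b = 5))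

/-! Choose a maximal packing of disjoint claws. What is left has maximum degree at most two, so it
falls apart into paths and cycles. The center and one leaf of each claw dominate the claw with two
of its four vertices, whichever leaf is chosen, and on a remaining path or cycle about a third of
the vertices suffices. Hence extremality leaves no room: averaging over all choices of leaves shows
that every piece outside the claws is a single edge. If there were two claws, exchanging leaves of
one of them for their neighbors would save a vertex, so there is just one claw, and the ways of
attaching single edges to its three leaves give `B2`, `B4` and `B5`. Without any claw `G` is itself
a cycle, and only `C4`, `C5` and `C8` are extremal. -/

section NTDominates

variable {G : SimpleGraph V} {S T U : Set V} {u v : V}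

theorem openNbhd_mono (h : S ⊆ T) : openNbhd G S ⊆ openNbhd G T :=
  fun _ ⟨u, hu, huv⟩ ↦ ⟨u, h hu, huv⟩

theorem mem_openNbhd_of_adj (hu : u ∈ S) (h : G.Adj v u) : v ∈ openNbhd G S :=
  ⟨u, hu, h.symm⟩

/-- `S` dominates `U` in the way an NTD-set dominates the whole graph: every vertex of `U` outside
`S` has a neighbor in `S` and a neighbor in `N(S)`. Vertices of `S` are exempt, as those among them
lying in `N(S)` automatically have a neighbor in `N(S)`; this makes the notion monotone in `S`. -/
def NTDominates (G : SimpleGraph V) (S U : Set V) : Prop :=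
  ∀ v ∈ U, v ∉ S → v ∈ openNbhd G S ∧ v ∈ openNbhd G (openNbhd G S)

theorem NTDominates.mono (h : NTDominates G S U) (hST : S ⊆ T) : NTDominates G T U :=
  fun v hv hvT ↦ (h v hv fun hvS ↦ hvT (hST hvS)).imp (openNbhd_mono hST ·)
    (openNbhd_mono (openNbhd_mono hST) ·)

theorem NTDominates.isNTDSet (h : NTDominates G S Set.univ) : IsNTDSet G S := by
  refine ⟨fun v hv ↦ (h v trivial hv).1, fun v hvN ↦ ?_⟩
  by_cases hv : v ∈ S
  · obtain ⟨u, -, huv⟩ := hvN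
    exact ⟨u, ⟨v, hv, huv.symm⟩, huv.symm⟩
  · obtain ⟨u, hu, huv⟩ := (h v trivial hv).2
    exact ⟨u, hu, huv.symm⟩

theorem NTDominates.ntdNum_le (h : NTDominates G S Set.univ) : ntdNum G ≤ S.ncard :=
  Nat.sInf_le ⟨S, h.isNTDSet, rfl⟩

end NTDominates

section MaxDegreeTwo

variable {H : SimpleGraph V} {a b v x y z : V}

theorem two_lt_ncard_neighborSet [Finite V] (hx : H.Adj v x) (hy : H.Adj v y)
    (hz : H.Adj v z) (hxy : x ≠ y) (hxz : x ≠ z) (hyz : y ≠ z) :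
    2 < (H.neighborSet v).ncard :=
  (Set.two_lt_ncard_iff (Set.toFinite _)).2 ⟨x, y, z, hx, hy, hz, hxy, hxz, hyz⟩

/-- `p` is a longest path among those with the same first vertex. -/
def IsLongestPathFrom (p : H.Walk a b) : Prop :=
  p.IsPath ∧ ∀ c (q : H.Walk a c), q.IsPath → q.length ≤ p.length

theorem exists_isLongestPathFrom [Finite V] (H : SimpleGraph V) (a : V) :
    ∃ (b : V) (p : H.Walk a b), IsLongestPathFrom p := by
  have := Fintype.ofFinite V
  let lengths := {n | ∃ (b : V) (p : H.Walk a b), p.IsPath ∧ p.length = n}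
  have hfin : lengths.Finite := (Set.finite_lt_nat (Fintype.card V)).subset
    fun n ⟨_, _, hp, hn⟩ ↦ hn ▸ hp.length_lt
  obtain ⟨_, ⟨b, p, hp, rfl⟩, hmax⟩ := hfin.exists_maximal ⟨0, a, .nil, .nil, rfl⟩
  refine ⟨b, p, hp, fun c q hq ↦ ?_⟩
  by_contra! hlt
  exact hlt.not_ge (hmax ⟨c, q, hq, rfl⟩ hlt.le)

theorem IsLongestPathFrom.mem_support_of_adj_end {p : H.Walk a b} (hp : IsLongestPathFrom p)
    (h : H.Adj b y) : y ∈ p.support := by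
  by_contra hy
  have := hp.2 y (p.concat h) (hp.1.concat hy h)
  rw [Walk.length_concat] at this
  omega

theorem eq_getVert_pred_or_succ_of_adj [Finite V] (hH : ∀ v, (H.neighborSet v).ncard ≤ 2)
    {p : H.Walk a b} (hp : p.IsPath) {i : ℕ} (hi : 0 < i) (hip : i < p.length)
    (h : H.Adj (p.getVert i) y) : y = p.getVert (i - 1) ∨ y = p.getVert (i + 1) := by
  by_contra! hy
  have hpred := p.adj_getVert_succ (i := i - 1) (by omega)
  rw [Nat.sub_add_cancel hi] at hpred
  have hne : p.getVert (i - 1) ≠ p.getVert (i + 1) := fun heq ↦ by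
    have := hp.getVert_injOn (by simp; omega) (by simp; omega) heq
    omega
  exact (hH _).not_gt <| two_lt_ncard_neighborSet h hpred.symm
    (p.adj_getVert_succ hip) hy.1 hy.2 hne

theorem IsLongestPathFrom.adj_end_start [Finite V] (hH : ∀ v, (H.neighborSet v).ncard ≤ 2)
    {p : H.Walk a b} (hp : IsLongestPathFrom p) (hb : 2 ≤ (H.neighborSet b).ncard) :
    H.Adj b a ∧ 2 ≤ p.length := by
  obtain ⟨y, hby, hy⟩ := Set.exists_ne_of_one_lt_ncard hb (p.getVert (p.length - 1))
  obtain ⟨i, rfl, hi⟩ := Walk.mem_support_iff_exists_getVert.1 (hp.mem_support_of_adj_end hby)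
  have hib : i ≠ p.length := by
    rintro rfl
    exact H.irrefl (p.getVert_length ▸ hby)
  have hil : i ≠ p.length - 1 := fun h ↦ hy (h ▸ rfl)
  obtain rfl | hi0 := Nat.eq_zero_or_pos i
  · exact ⟨by simpa using hby, by omega⟩
  have hb' : H.Adj (p.getVert i) (p.getVert p.length) := by simpa using hby.symm
  have hinj := hp.1.getVert_injOn
  obtain h | h := eq_getVert_pred_or_succ_of_adj hH hp.1 hi0 (by omega) hb' <;>
  · have := hinj (by simp) (by simp; omega) h
    omega

theorem IsLongestPathFrom.adj_closed [Finite V] (hH : ∀ v, (H.neighborSet v).ncard ≤ 2)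
    {p : H.Walk a b} (hp : IsLongestPathFrom p)
    (ha : (H.neighborSet a).ncard ≤ 1 ∨ 2 ≤ (H.neighborSet b).ncard)
    (hx : x ∈ p.support) (hxy : H.Adj x y) : y ∈ p.support := by
  obtain ⟨i, rfl, hi⟩ := Walk.mem_support_iff_exists_getVert.1 hx
  obtain rfl | hil := hi.eq_or_lt
  · exact hp.mem_support_of_adj_end (by simpa using hxy)
  obtain rfl | hi0 := Nat.eq_zero_or_pos i
  · by_contra hy
    have hay : H.Adj a y := by simpa using hxy
    have hnext : H.Adj a (p.getVert 1) := by simpa using p.adj_getVert_succ hil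
    have hy1 : y ≠ p.getVert 1 := fun h ↦ hy (h ▸ p.getVert_mem_support 1)
    obtain ha | hb := ha
    · exact hy1 (Set.ncard_le_one (Set.toFinite _) |>.1 ha _ hay _ hnext)
    · obtain ⟨hba, hlen⟩ := hp.adj_end_start hH hb
      have h1b : p.getVert 1 ≠ b := fun h ↦ by
        have := hp.1.getVert_injOn (by simp; omega) (by simp) (h.trans p.getVert_length.symm)
        omega
      exact (hH a).not_gt <| two_lt_ncard_neighborSet hay hnext hba.symm hy1
        (fun h ↦ hy (h ▸ p.end_mem_support)) h1b
  · obtain rfl | rfl := eq_getVert_pred_or_succ_of_adj hH hp.1 hi0 hil hxy <;>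
      exact p.getVert_mem_support _

theorem exists_spanning_path [Finite V] (hH : ∀ v, (H.neighborSet v).ncard ≤ 2)
    {A : Set V} (hA : ∀ v, (H.neighborSet v).ncard ≤ 1 → v ∈ A) (hx : x ∈ A) :
    ∃ (a b : V) (p : H.Walk a b), p.IsPath ∧ (∀ y, y ∈ p.support ↔ H.Reachable x y) ∧
      a ∈ A ∧ (b ∈ A ∨ H.Adj b a) := by
  obtain ⟨a, hxa, haA, ha⟩ : ∃ a, H.Reachable x a ∧ a ∈ A ∧
      ((H.neighborSet a).ncard ≤ 1 ∨ ∀ b, H.Reachable x b → 2 ≤ (H.neighborSet b).ncard) := by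
    by_cases! h : ∃ a, H.Reachable x a ∧ (H.neighborSet a).ncard ≤ 1
    · obtain ⟨a, hxa, ha⟩ := h
      exact ⟨a, hxa, hA a ha, .inl ha⟩
    · exact ⟨x, .rfl, hx, .inr fun b hb ↦ h b hb⟩
  obtain ⟨b, p, hp⟩ := exists_isLongestPathFrom H a
  have hclosed {u w : V} (hu : u ∈ p.support) (huw : H.Adj u w) : w ∈ p.support :=
    hp.adj_closed hH (ha.imp_right fun h ↦ h b (hxa.trans p.reachable)) hu huw
  refine ⟨a, b, p, hp.1, fun y ↦ ⟨fun hy ↦ ?_, fun hy ↦ ?_⟩, haA, ?_⟩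
  · obtain ⟨i, rfl, -⟩ := Walk.mem_support_iff_exists_getVert.1 hy
    exact hxa.trans (p.take i).reachable
  · have hay : Relation.ReflTransGen H.Adj a y :=
      (reachable_iff_reflTransGen a y).1 (hxa.symm.trans hy)
    induction hay with
    | refl => exact p.start_mem_support
    | tail _ hadj ih => exact hclosed (ih (hxa.trans ((reachable_iff_reflTransGen _ _).2 ‹_›))) hadj
  · by_cases hb : (H.neighborSet b).ncard ≤ 1
    · exact .inl (hA b hb)
    · exact .inr (hp.adj_end_start hH (by omega)).1

end MaxDegreeTwo

section Isomorphisms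

variable {W : Type*} {G : SimpleGraph V} {H : SimpleGraph W}

theorem mem_of_adj_closed {s : Set V} {x : V} (hG : G.Connected) (hx : x ∈ s)
    (hs : ∀ u ∈ s, ∀ w, G.Adj u w → w ∈ s) (y : V) : y ∈ s := by
  have hxy := (reachable_iff_reflTransGen x y).1 (hG x y)
  induction hxy with
  | refl => exact hx
  | tail _ hadj ih => exact hs _ ih _ hadj

theorem nonempty_iso_of_injective_hom [Nonempty W] (hG : G.Connected) (f : H →g G)
    (hinj : Function.Injective f) (hlocal : ∀ i y, G.Adj (f i) y → ∃ j, H.Adj i j ∧ f j = y) :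
    Nonempty (G ≃g H) := by
  have hsurj : Function.Surjective f := by
    refine mem_of_adj_closed (s := Set.range f) hG
      ⟨Classical.arbitrary W, rfl⟩ ?_
    rintro _ ⟨i, rfl⟩ y hy
    obtain ⟨j, -, rfl⟩ := hlocal i y hy
    exact ⟨j, rfl⟩
  refine ⟨RelIso.symm ⟨Equiv.ofBijective f ⟨hinj, hsurj⟩, fun {i j} ↦ ⟨fun h ↦ ?_, f.map_adj⟩⟩⟩
  obtain ⟨j', hij', hj'⟩ := hlocal i (f j) h
  rwa [← hinj hj']

theorem nonempty_iso_cycleGraph [Finite V] (hG : G.Connected)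
    (hdeg : ∀ v, (G.neighborSet v).ncard ≤ 2) {u v : V} {p : G.Walk u v} (hp : p.IsPath)
    (hlen : 2 ≤ p.length) (hvu : G.Adj v u) : Nonempty (G ≃g cycleGraph (p.length + 1)) := by
  obtain ⟨n, hn⟩ : ∃ n, p.length = n + 2 := ⟨p.length - 2, by omega⟩
  rw [hn]
  let f (i : Fin (n + 3)) : V := p.getVert i
  have hinj : Function.Injective f := fun i j h ↦
    Fin.ext (hp.getVert_injOn (by simp; omega) (by simp; omega) h)
  have hsucc (i : Fin (n + 3)) : G.Adj (f i) (f (i + 1)) := by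
    obtain rfl | hi := eq_or_ne i (Fin.last _)
    · simpa [f, ← hn] using hvu
    · have hlt := Fin.val_lt_last hi
      simpa [f, Fin.val_add_one, hi] using p.adj_getVert_succ (i := i) (by omega)
  have hpred (i : Fin (n + 3)) : G.Adj (f i) (f (i - 1)) := by
    simpa using (hsucc (i - 1)).symm
  refine nonempty_iso_of_injective_hom hG ⟨f, fun {i j} hij ↦ ?_⟩ hinj fun i y hy ↦ ?_
  · obtain h | h := cycleGraph_adj.1 hij
    · rw [← sub_add_cancel i j, h, add_comm]
      exact (hsucc j).symm
    · rw [← sub_add_cancel j i, h, add_comm]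
      exact hsucc i
  · have hne : f (i + 1) ≠ f (i - 1) := hinj.ne fun h ↦ by
      rw [sub_eq_add_neg, add_right_inj, eq_neg_iff_add_eq_zero] at h
      have h2 : 2 % (n + 3) = 0 := by simpa [Fin.ext_iff, Fin.val_add] using h
      rw [Nat.mod_eq_of_lt (by omega)] at h2
      omega
    by_contra! hno
    exact (hdeg _).not_gt <| two_lt_ncard_neighborSet hy (hsucc i) (hpred i)
      (hno (i + 1) (by simp [cycleGraph_adj])).symm
      (hno (i - 1) (by simp [cycleGraph_adj])).symm hne

end Isomorphisms

section PathDominatingSet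

variable {G : SimpleGraph V} {S : Set V} {u v : V}

/-- The vertices in every third position `1, 4, 7, …` of a walk, together with the penultimate one
if the walk has `3 j + 1` vertices. On a walk with a single vertex this is that vertex, by
truncated subtraction. -/
def pathDomSet (p : G.Walk u v) : Set V :=
  p.getVert '' {i | i ≤ p.length ∧ (i % 3 = 1 ∨ p.length % 3 = 0 ∧ i = p.length - 1)}

theorem ncard_pathDomSet_le (p : G.Walk u v) : (pathDomSet p).ncard ≤ (p.length + 3) / 3 := by
  have hsub : pathDomSet p ⊆
      (fun j ↦ p.getVert (min (3 * j + 1) (p.length - 1 + (p.length % 3)))) ''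
        Set.Iio ((p.length + 3) / 3) := by
    rintro _ ⟨i, ⟨hi, h⟩, rfl⟩
    refine ⟨(i + 1) / 3, by simp; omega, ?_⟩
    dsimp only
    congr 1
    omega
  refine (Set.ncard_le_ncard hsub ((Set.finite_Iio _).image _)).trans ?_
  refine (Set.ncard_image_le (Set.finite_Iio _)).trans ?_
  simp

variable {p : G.Walk u v} {i j : ℕ}

theorem getVert_mem_pathDomSet (hi : i ≤ p.length)
    (h : i % 3 = 1 ∨ p.length % 3 = 0 ∧ i = p.length - 1) : p.getVert i ∈ pathDomSet p :=
  ⟨i, ⟨hi, h⟩, rfl⟩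

theorem getVert_mem_openNbhd (h : i = j + 1 ∨ j = i + 1) (hi : i ≤ p.length) (hj : j ≤ p.length)
    (hjS : p.getVert j ∈ S) : p.getVert i ∈ openNbhd G S := by
  refine mem_openNbhd_of_adj hjS ?_
  obtain rfl | rfl := h
  · exact (p.adj_getVert_succ (by omega)).symm
  · exact p.adj_getVert_succ (by omega)

theorem getVert_mem_openNbhd_pathDomSet (hlen : 1 ≤ p.length) (hi : i ≤ p.length)
    (h : i % 3 ≠ 1 ∨ p.length % 3 = 0 ∧ i = p.length - 2) :
    p.getVert i ∈ openNbhd G (pathDomSet p) := by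
  by_cases hnext : i < p.length ∧ (i % 3 = 0 ∨ p.length % 3 = 0 ∧ i = p.length - 2)
  · exact getVert_mem_openNbhd (j := i + 1) (.inr rfl) hi hnext.1 <|
      getVert_mem_pathDomSet hnext.1 (by omega)
  · exact getVert_mem_openNbhd (j := i - 1) (by omega) hi (by omega) <|
      getVert_mem_pathDomSet (by omega) (by omega)

theorem getVert_mem_openNbhd_openNbhd_pathDomSet (hi : i < p.length) (hi0 : 0 < i)
    (h : i % 3 ≠ 1) : p.getVert i ∈ openNbhd G (openNbhd G (pathDomSet p)) := by
  obtain h0 | h2 : i % 3 = 0 ∨ i % 3 = 2 := by omega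
  · exact getVert_mem_openNbhd (j := i - 1) (by omega) hi.le (by omega) <|
      getVert_mem_openNbhd_pathDomSet (by omega) (by omega) (by omega)
  · exact getVert_mem_openNbhd (j := i + 1) (by omega) hi.le hi <|
      getVert_mem_openNbhd_pathDomSet (by omega) (by omega) (by omega)

theorem ntDominates_support_of_pathDomSet_subset (hS : pathDomSet p ⊆ S)
    (hu : u ∈ S ∨ u ∈ openNbhd G (openNbhd G S))
    (hv : v ∈ openNbhd G (openNbhd G S) ∨ G.Adj v u) : NTDominates G S {w | w ∈ p.support} := by
  intro w hw hwS
  obtain ⟨i, rfl, hi⟩ := Walk.mem_support_iff_exists_getVert.1 hw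
  have hnot : ¬ (i % 3 = 1 ∨ p.length % 3 = 0 ∧ i = p.length - 1) := fun h ↦
    hwS (hS (getVert_mem_pathDomSet hi h))
  have hNN := openNbhd_mono (G := G) (openNbhd_mono (G := G) hS)
  refine ⟨openNbhd_mono hS (getVert_mem_openNbhd_pathDomSet (by omega) hi (by omega)), ?_⟩
  obtain rfl | hi0 := Nat.eq_zero_or_pos i
  · simpa using hu.resolve_left (by simpa using hwS)
  obtain rfl | hlt := hi.eq_or_lt
  · obtain h0 | h2 : p.length % 3 = 0 ∨ p.length % 3 = 2 := by omega
    · refine hNN <| getVert_mem_openNbhd (j := p.length - 1) (by omega) le_rfl (by omega) <|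
        getVert_mem_openNbhd (j := p.length - 2) (by omega) (by omega) (by omega) <|
        getVert_mem_pathDomSet (by omega) (by omega)
    · rw [p.getVert_length]
      refine hv.elim id fun hvu ↦ mem_openNbhd_of_adj (openNbhd_mono hS ?_) hvu
      simpa using getVert_mem_openNbhd_pathDomSet (p := p) (i := 0) (by omega) (by omega) (by omega)
  · exact hNN (getVert_mem_openNbhd_openNbhd_pathDomSet hlt hi0 (by omega))

end PathDominatingSet

/-- The graphs under study: connected, of minimum degree at least `2`, and with neighborhood total
domination number at least half the order. -/
structure NTDExtremal (G : SimpleGraph V) : Prop where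
  connected : G.Connected
  two_le_ncard_neighborSet (v : V) : 2 ≤ (G.neighborSet v).ncard
  card_le : Nat.card V ≤ 2 * ntdNum G

namespace NTDExtremal

variable {G : SimpleGraph V}

theorem card_le_of_ntDominates {S : Set V} (hG : NTDExtremal G) (hS : NTDominates G S Set.univ) :
    Nat.card V ≤ 2 * S.ncard :=
  hG.card_le.trans (Nat.mul_le_mul_left 2 hS.ntdNum_le)

theorem exists_adj_ne (hG : NTDExtremal G) (v x : V) : ∃ y, G.Adj v y ∧ y ≠ x :=
  Set.exists_ne_of_one_lt_ncard (hG.two_le_ncard_neighborSet v) x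

theorem card_le_of_closed_path (hG : NTDExtremal G) {u v : V} {p : G.Walk u v}
    (hvu : G.Adj v u) (hp : ∀ w, w ∈ p.support) :
    Nat.card V ≤ 2 * ((p.length + 3) / 3 + if p.length % 3 = 1 then 1 else 0) := by
  have hlen : 1 ≤ p.length := by
    by_contra! h
    exact hvu.ne (p.eq_of_length_eq_zero (by omega)).symm
  have huniv : {w | w ∈ p.support} = Set.univ := Set.eq_univ_of_forall hp
  split_ifs with hmod
  · have hdom : NTDominates G (insert u (pathDomSet p)) Set.univ :=
      huniv ▸ ntDominates_support_of_pathDomSet_subset (Set.subset_insert _ _)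
        (.inl (Set.mem_insert _ _)) (.inr hvu)
    grw [hG.card_le_of_ntDominates hdom, Set.ncard_insert_le, ncard_pathDomSet_le]
  · have hv : v ∈ openNbhd G (pathDomSet p) := by
      simpa using getVert_mem_openNbhd_pathDomSet hlen le_rfl (.inl hmod)
    have hdom : NTDominates G (pathDomSet p) Set.univ :=
      huniv ▸ ntDominates_support_of_pathDomSet_subset subset_rfl
        (.inr (mem_openNbhd_of_adj hv hvu.symm)) (.inr hvu)
    rw [add_zero]
    grw [hG.card_le_of_ntDominates hdom, ncard_pathDomSet_le]

theorem nonempty_iso_cycleGraph [Finite V] (hG : NTDExtremal G)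
    (hdeg : ∀ v, (G.neighborSet v).ncard ≤ 2) :
    Nonempty (G ≃g cycleGraph 4) ∨ Nonempty (G ≃g cycleGraph 5) ∨ Nonempty (G ≃g cycleGraph 8) := by
  have := hG.connected.nonempty
  obtain ⟨v, p, hp⟩ := exists_isLongestPathFrom G (Classical.arbitrary V)
  obtain ⟨hvu, hlen⟩ := hp.adj_end_start hdeg (hG.two_le_ncard_neighborSet v)
  have hspan := mem_of_adj_closed hG.connected (s := {w | w ∈ p.support}) p.start_mem_support
    fun x hx y ↦ hp.adj_closed hdeg (.inr (hG.two_le_ncard_neighborSet v)) hx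
  have hcard := hG.card_le_of_closed_path hvu hspan
  have hiso := _root_.nonempty_iso_cycleGraph hG.connected hdeg hp.1 hlen hvu
  have horder : Nat.card V = p.length + 1 := by simpa using Nat.card_congr hiso.some.toEquiv
  obtain h | h | h : p.length = 3 ∨ p.length = 4 ∨ p.length = 7 := by
    split_ifs at hcard <;> omega
  all_goals
    rw [h] at hiso
    simp only [hiso, true_or, or_true]

end NTDExtremal

/-- A family, indexed by `ι`, of disjoint copies of the claw `K_{1,3}` in `G`, not necessarily
induced. -/
structure ClawPacking (G : SimpleGraph V) (ι : Type*) where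
  center : ι → V
  leaf : ι → Fin 3 → V
  center_injective : Function.Injective center
  leaf_injective : Function.Injective2 leaf
  center_ne_leaf (i j : ι) (k : Fin 3) : center i ≠ leaf j k
  adj (i : ι) (k : Fin 3) : G.Adj (center i) (leaf i k)

namespace ClawPacking

variable {G : SimpleGraph V} {ι : Type*} (P : ClawPacking G ι) {I J : Set ι} {a : ι → Fin 3}
  {i : ι} {v x : V}

/-- The vertices of the claws with index in `I`. -/
def claws (I : Set ι) : Set V := P.center '' I ∪ Function.uncurry P.leaf '' I ×ˢ Set.univ

/-- The vertices of all claws. -/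
abbrev support : Set V := P.claws Set.univ

/-- The centers of the claws with index in `I`, and the leaf chosen by `a` in each of them. These
`2 |I|` vertices dominate the `4 |I|` vertices of these claws. -/
def core (I : Set ι) (a : ι → Fin 3) : Set V := P.center '' I ∪ (fun i ↦ P.leaf i (a i)) '' I

/-- No further claw is disjoint from those of the packing: for finite `V`, no vertex outside the
claws has three neighbors outside the claws. -/
def IsSaturated : Prop := ∀ v, ((G.induce P.supportᶜ).neighborSet v).ncard ≤ 2

theorem mem_claws : x ∈ P.claws I ↔ ∃ i ∈ I, x = P.center i ∨ ∃ k, x = P.leaf i k := by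
  simp only [claws, Set.mem_union, Set.mem_image, Set.mem_prod, Prod.exists,
    Function.uncurry_apply_pair]
  grind

theorem claws_mono (h : I ⊆ J) : P.claws I ⊆ P.claws J :=
  fun _ hx ↦ P.mem_claws.2 ((P.mem_claws.1 hx).imp fun _ ↦ And.imp_left (h ·))

theorem center_mem_claws (hi : i ∈ I) : P.center i ∈ P.claws I :=
  P.mem_claws.2 ⟨i, hi, .inl rfl⟩

theorem leaf_mem_claws (hi : i ∈ I) (k : Fin 3) : P.leaf i k ∈ P.claws I :=
  P.mem_claws.2 ⟨i, hi, .inr ⟨k, rfl⟩⟩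

theorem center_mem_claws_iff : P.center i ∈ P.claws I ↔ i ∈ I := by
  refine ⟨fun h ↦ ?_, P.center_mem_claws⟩
  obtain ⟨j, hj, h | ⟨k, h⟩⟩ := P.mem_claws.1 h
  exacts [P.center_injective h ▸ hj, absurd h (P.center_ne_leaf _ _ _)]

theorem ne_center (hx : x ∉ P.support) (i : ι) : x ≠ P.center i :=
  fun h ↦ hx (h ▸ P.center_mem_claws (Set.mem_univ i))

theorem ne_leaf (hx : x ∉ P.support) (i : ι) (k : Fin 3) : x ≠ P.leaf i k :=
  fun h ↦ hx (h ▸ P.leaf_mem_claws (Set.mem_univ i) k)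

theorem center_mem_core (hi : i ∈ I) : P.center i ∈ P.core I a :=
  .inl ⟨i, hi, rfl⟩

theorem leaf_mem_core (hi : i ∈ I) : P.leaf i (a i) ∈ P.core I a :=
  .inr ⟨i, hi, rfl⟩

theorem core_subset_claws : P.core I a ⊆ P.claws I := by
  rintro _ (⟨i, hi, rfl⟩ | ⟨i, hi, rfl⟩)
  exacts [P.center_mem_claws hi, P.leaf_mem_claws hi _]

theorem claws_subset_openNbhd_core : P.claws I ⊆ openNbhd G (P.core I a) := by
  intro x hx
  obtain ⟨i, hi, rfl | ⟨k, rfl⟩⟩ := P.mem_claws.1 hx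
  · exact ⟨_, P.leaf_mem_core hi, (P.adj i (a i)).symm⟩
  · exact ⟨_, P.center_mem_core hi, P.adj i k⟩

theorem openNbhd_core_subset : openNbhd G (P.core I a) ⊆ openNbhd G (openNbhd G (P.core I a)) :=
  openNbhd_mono (P.core_subset_claws.trans P.claws_subset_openNbhd_core)

theorem exists_mem_core (hx : x ∈ P.claws I) : ∃ a, x ∈ P.core I a := by
  obtain ⟨i, hi, rfl | ⟨k, rfl⟩⟩ := P.mem_claws.1 hx
  · exact ⟨fun _ ↦ 0, P.center_mem_core hi⟩
  · exact ⟨fun _ ↦ k, P.leaf_mem_core hi⟩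

theorem ntDominates_of_subset_openNbhd_core {U : Set V} (h : U ⊆ openNbhd G (P.core I a)) :
    NTDominates G (P.core I a) U :=
  fun _ hv _ ↦ ⟨h hv, P.openNbhd_core_subset (h hv)⟩

theorem ncard_core_le [Finite ι] : (P.core I a).ncard ≤ 2 * I.ncard := by
  grw [core, Set.ncard_union_le, Set.ncard_image_le, Set.ncard_image_le, two_mul]

theorem ncard_support [Finite ι] : P.support.ncard = 4 * Nat.card ι := by
  have hdisj : Disjoint (P.center '' Set.univ)
      (Function.uncurry P.leaf '' Set.univ ×ˢ Set.univ) := by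
    rw [Set.disjoint_left]
    rintro _ ⟨i, -, rfl⟩ ⟨⟨j, k⟩, -, h⟩
    exact P.center_ne_leaf i j k h.symm
  rw [support, claws, Set.ncard_union_eq hdisj, Set.ncard_image_of_injective _ P.center_injective,
    Set.ncard_image_of_injective _ P.leaf_injective.uncurry, Set.univ_prod_univ, Set.ncard_univ,
    Set.ncard_univ, Nat.card_prod, Nat.card_fin]
  ring

/-- The packing obtained by adding a claw at `v` disjoint from the given ones. -/
def cons {m : ℕ} (P : ClawPacking G (Fin m)) (v : V) (l : Fin 3 → V) (hv : v ∉ P.support)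
    (hl : ∀ k, l k ∉ P.support) (hinj : Function.Injective l) (hadj : ∀ k, G.Adj v (l k)) :
    ClawPacking G (Fin (m + 1)) where
  center := Fin.cons v P.center
  leaf := Fin.cons l P.leaf
  center_injective := Fin.cons_injective_iff.2
    ⟨fun ⟨i, h⟩ ↦ P.ne_center hv i h.symm, P.center_injective⟩
  leaf_injective i j k k' := by
    cases i using Fin.cases <;> cases j using Fin.cases
    · simpa using @hinj k k'
    · simp [P.ne_leaf (hl _)]
    · simp [(P.ne_leaf (hl _) _ _).symm]
    · simpa using @P.leaf_injective _ _ k k'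
  center_ne_leaf i j k := by
    cases i using Fin.cases <;> cases j using Fin.cases
    · exact (hadj k).ne
    · exact P.ne_leaf hv _ k
    · exact (P.ne_center (hl k) _).symm
    · exact P.center_ne_leaf _ _ k
  adj i k := by
    cases i using Fin.cases
    · exact hadj k
    · exact P.adj _ k

end ClawPacking

theorem exists_clawPacking_isSaturated [Finite V] (G : SimpleGraph V) :
    ∃ (m : ℕ) (P : ClawPacking G (Fin m)), P.IsSaturated := by
  have hfin : {m | Nonempty (ClawPacking G (Fin m))}.Finite := by
    refine (Set.finite_le_nat (Nat.card V)).subset fun m ⟨P⟩ ↦ ?_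
    simpa using Nat.card_le_card_of_injective _ P.center_injective
  have hempty : Nonempty (ClawPacking G (Fin 0)) :=
    ⟨⟨Fin.elim0, Fin.elim0, fun i ↦ i.elim0, fun i ↦ i.elim0, fun i ↦ i.elim0, fun i ↦ i.elim0⟩⟩
  obtain ⟨m, ⟨P⟩, hmax⟩ := hfin.exists_maximal ⟨0, hempty⟩
  refine ⟨m, P, fun v ↦ ?_⟩
  by_contra! hv
  obtain ⟨x, y, z, hx, hy, hz, hxy, hxz, hyz⟩ := (Set.two_lt_ncard_iff (Set.toFinite _)).1 hv
  let l : Fin 3 → ↥P.supportᶜ := ![x, y, z]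
  have hinj : Function.Injective l := by
    intro k k'
    fin_cases k <;> fin_cases k' <;> simp [l, hxy, hxz, hyz, hxy.symm, hxz.symm, hyz.symm]
  have hadj (k : Fin 3) : G.Adj v (l k) := by
    fin_cases k
    exacts [hx, hy, hz]
  have := hmax ⟨P.cons v (fun k ↦ l k) v.2 (fun k ↦ (l k).2)
    (Subtype.val_injective.comp hinj) hadj⟩ (Nat.le_succ m)
  omega

open Finset in
-- Averaging over the nine translates of `a` by the functions supported on the two coordinates
-- `x.1` and `y.1`.
theorem nine_mul_card_filter_ne_and_ne_le {ι : Type*} [Fintype ι] [DecidableEq ι]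
    {x y : ι × Fin 3} (hxy : x ≠ y) :
    9 * #{a : ι → Fin 3 | a x.1 ≠ x.2 ∧ a y.1 ≠ y.2} ≤ 4 * Fintype.card (ι → Fin 3) := by
  let shift (st : Fin 3 × Fin 3) : ι → Fin 3 := Pi.single x.1 st.1 + Pi.single y.1 st.2
  let bad (a : ι → Fin 3) : Prop := a x.1 ≠ x.2 ∧ a y.1 ≠ y.2
  have hinv (st : Fin 3 × Fin 3) : #{a | bad (a + shift st)} = #{a | bad a} :=
    card_bij (fun a _ ↦ a + shift st) (by simp) (by simp) fun b hb ↦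
      ⟨b - shift st, by simpa using hb⟩
  have hsame : ∀ p q r : Fin 3, p ≠ q →
      #{st : Fin 3 × Fin 3 | r + (st.1 + st.2) ≠ p ∧ r + (st.1 + st.2) ≠ q} ≤ 4 := by decide
  have hdiff : ∀ p q r s : Fin 3,
      #{st : Fin 3 × Fin 3 | r + st.1 ≠ p ∧ s + st.2 ≠ q} ≤ 4 := by decide
  have hlocal (a : ι → Fin 3) : #{st | bad (a + shift st)} ≤ 4 := by
    obtain ⟨i, p⟩ := x
    obtain ⟨j, q⟩ := y
    obtain rfl | hij := eq_or_ne i j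
    · simpa only [bad, shift, Pi.add_apply, Pi.single_eq_same] using
        hsame p q (a i) fun h ↦ hxy (h ▸ rfl)
    · simpa only [bad, shift, Pi.add_apply, Pi.single_eq_same, Pi.single_eq_of_ne hij,
        Pi.single_eq_of_ne hij.symm, add_zero, zero_add] using hdiff p q (a i) (a j)
  calc 9 * #{a | bad a} = ∑ st, #{a | bad (a + shift st)} := by simp [hinv]
    _ = ∑ a, #{st | bad (a + shift st)} := by simp only [card_filter]; exact sum_comm
    _ ≤ 4 * Fintype.card (ι → Fin 3) := by
      grw [sum_le_card_nsmul _ _ 4 fun a _ ↦ hlocal a]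
      simp [mul_comm]

open Finset in
theorem exists_two_mul_card_filter_ne_and_ne_lt {ι α : Type*} [Finite ι] {s : Finset α}
    (hs : s.Nonempty) {f g : α → ι × Fin 3} (hfg : ∀ r ∈ s, f r ≠ g r) :
    ∃ a : ι → Fin 3, 2 * #{r ∈ s | a (f r).1 ≠ (f r).2 ∧ a (g r).1 ≠ (g r).2} < #s := by
  classical
  have := Fintype.ofFinite ι
  by_contra! h
  have hle : 9 * (Fintype.card (ι → Fin 3) * #s) ≤ 8 * (Fintype.card (ι → Fin 3) * #s) :=
    calc 9 * (Fintype.card (ι → Fin 3) * #s)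
        ≤ 9 * ∑ a : ι → Fin 3, 2 * #{r ∈ s | a (f r).1 ≠ (f r).2 ∧ a (g r).1 ≠ (g r).2} := by
          grw [← card_nsmul_le_sum _ _ #s fun a _ ↦ h a]
          simp
      _ = 2 * ∑ r ∈ s, 9 * #{a : ι → Fin 3 | a (f r).1 ≠ (f r).2 ∧ a (g r).1 ≠ (g r).2} := by
          simp only [card_filter, ← mul_sum]
          rw [sum_comm]
          ring
      _ ≤ 2 * ∑ r ∈ s, 4 * Fintype.card (ι → Fin 3) := by
          exact Nat.mul_le_mul_left 2 <| sum_le_sum fun r hr ↦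
            nine_mul_card_filter_ne_and_ne_le (hfg r hr)
      _ = 8 * (Fintype.card (ι → Fin 3) * #s) := by
          rw [sum_const, smul_eq_mul]
          ring
  have hpos : 0 < Fintype.card (ι → Fin 3) * #s := by
    have := hs.card_pos
    have := Fintype.card_pos (α := ι → Fin 3)
    positivity
  omega

theorem ncard_support_of_isPath {G : SimpleGraph V} {u v : V} {p : G.Walk u v} (hp : p.IsPath) :
    {w | w ∈ p.support}.ncard = p.length + 1 := by
  have himage : {w | w ∈ p.support} = p.getVert '' {i | i ≤ p.length} := by
    ext w
    simp [Walk.mem_support_iff_exists_getVert, and_comm]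
  rw [himage, hp.getVert_injOn.ncard_image]
  exact Set.ncard_Iic_nat p.length

namespace ClawPacking

section Pieces

variable {G : SimpleGraph V} {ι : Type*} (P : ClawPacking G ι) {v w : V}

/-- The pieces of a packing: the components of the graph left over by its claws. -/
abbrev Piece : Type _ := (G.induce P.supportᶜ).ConnectedComponent

/-- The vertices of a piece. -/
def verts (c : P.Piece) : Set V := Subtype.val '' c.supp

variable {P} {c : P.Piece}

theorem exists_mem_verts (hv : v ∉ P.support) : ∃ c, v ∈ P.verts c :=
  ⟨connectedComponentMk _ ⟨v, hv⟩, ⟨v, hv⟩, rfl, rfl⟩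

theorem notMem_support_of_mem_verts (hv : v ∈ P.verts c) : v ∉ P.support := by
  obtain ⟨v, -, rfl⟩ := hv
  exact v.2

theorem mem_verts_of_adj (hv : v ∈ P.verts c) (hw : w ∉ P.support) (h : G.Adj v w) :
    w ∈ P.verts c := by
  obtain ⟨v, rfl, rfl⟩ := hv
  exact ⟨⟨w, hw⟩, ConnectedComponent.sound (Adj.reachable h.symm), rfl⟩

theorem mem_support_or_mem_verts_of_adj (hv : v ∈ P.verts c) (h : G.Adj v w) :
    w ∈ P.support ∨ w ∈ P.verts c :=
  or_iff_not_imp_left.2 fun hw ↦ mem_verts_of_adj hv hw h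

theorem card_eq_add_sum_ncard_verts [Finite V] [Finite ι] [Fintype P.Piece] :
    Nat.card V = 4 * Nat.card ι + ∑ c : P.Piece, (P.verts c).ncard := by
  have hrest : P.supportᶜ.ncard = ∑ c : P.Piece, (P.verts c).ncard := by
    rw [← Nat.card_coe_set_eq,
      ← Nat.card_congr (Equiv.sigmaFiberEquiv (G.induce P.supportᶜ).connectedComponentMk),
      Nat.card_sigma]
    exact Finset.sum_congr rfl fun c _ ↦ (Set.ncard_image_of_injective _ Subtype.val_injective).symm
  rw [← P.ncard_support, ← hrest, Set.ncard_add_ncard_compl]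

end Pieces

section PieceSize

variable {G : SimpleGraph V} {ι : Type*} {P : ClawPacking G ι}
  {a : ι → Fin 3} {c : P.Piece} {v w : V}

theorem sum_ncard_verts_le [Finite V] [Finite ι] [Fintype P.Piece] (hG : NTDExtremal G)
    {Q : P.Piece → Set V} (hQ : ∀ c, NTDominates G (P.core Set.univ a ∪ Q c) (P.verts c)) :
    ∑ c, (P.verts c).ncard ≤ 2 * ∑ c, (Q c).ncard := by
  have hdom : NTDominates G (P.core Set.univ a ∪ ⋃ c, Q c) Set.univ := by
    intro v _
    by_cases hv : v ∈ P.support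
    · exact ((P.ntDominates_of_subset_openNbhd_core P.claws_subset_openNbhd_core).mono
        Set.subset_union_left) v hv
    · obtain ⟨c, hc⟩ := exists_mem_verts hv
      exact (hQ c).mono (Set.union_subset_union_right _ (Set.subset_iUnion Q c)) v hc
  have hcard := hG.card_le_of_ntDominates hdom
  grw [Set.ncard_union_le, P.ncard_core_le, Set.ncard_iUnion_le_of_fintype, Set.ncard_univ,
    card_eq_add_sum_ncard_verts (P := P)] at hcard
  omega

theorem exists_mem_verts_mem_openNbhd_support [Nonempty ι] (hG : NTDExtremal G) (c : P.Piece) :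
    ∃ v ∈ P.verts c, v ∈ openNbhd G P.support := by
  by_contra! h
  obtain ⟨⟨r, hr⟩, hrc⟩ := c.exists_rep
  have hcenter := P.center_mem_claws (Set.mem_univ (Classical.arbitrary ι))
  refine notMem_support_of_mem_verts (c := c) ?_ hcenter
  refine mem_of_adj_closed hG.connected (s := P.verts c) ⟨_, hrc, rfl⟩ (fun u hu w huw ↦ ?_) _
  exact mem_verts_of_adj hu (fun hw ↦ h u hu (mem_openNbhd_of_adj hw huw)) huw

theorem IsSaturated.exists_spanning_path_piece [Finite V] [Nonempty ι] (hP : P.IsSaturated)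
    (hG : NTDExtremal G) (c : P.Piece) :
    ∃ (u v : V) (p : G.Walk u v), p.IsPath ∧ {w | w ∈ p.support} = P.verts c ∧
      u ∈ openNbhd G P.support ∧ (v ∈ openNbhd G P.support ∨ G.Adj v u) := by
  let H := G.induce P.supportᶜ
  let A : Set ↥P.supportᶜ := {w | (w : V) ∈ openNbhd G P.support}
  have hA (w) (hw : (H.neighborSet w).ncard ≤ 1) : w ∈ A := by
    obtain ⟨x, y, hx, hy, hxy⟩ := (Set.one_lt_ncard_iff (Set.toFinite _)).1
      (hG.two_le_ncard_neighborSet w)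
    by_contra hwA
    have hout {z : V} (hz : G.Adj w z) : z ∉ P.support := fun hzX ↦
      hwA (mem_openNbhd_of_adj hzX hz)
    exact hxy <| congrArg Subtype.val <| (Set.ncard_le_one (Set.toFinite _)).1 hw
      ⟨x, hout hx⟩ hx ⟨y, hout hy⟩ hy
  obtain ⟨_, ⟨x, hxc, rfl⟩, hxA⟩ := exists_mem_verts_mem_openNbhd_support hG c
  obtain ⟨u, v, p, hp, hspan, hu, hv⟩ := exists_spanning_path hP hA hxA
  refine ⟨_, _, p.map (Embedding.induce _).toHom, hp.map Subtype.val_injective, ?_, hu, hv⟩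
  have hmem (y : ↥P.supportᶜ) : y ∈ p.support ↔ y ∈ c.supp := by
    rw [hspan, c.mem_supp_iff, ← c.mem_supp_iff x |>.1 hxc, ConnectedComponent.eq]
    exact ⟨.symm, .symm⟩
  have hmap := p.support_map (Embedding.induce (G := G) P.supportᶜ).toHom
  ext w
  rw [Set.mem_ofPred_eq, hmap, List.mem_map]
  exact exists_congr fun y ↦ and_congr_left fun _ ↦ hmem y

theorem support_subset_openNbhd_openNbhd {S : Set V} (hS : P.core Set.univ a ⊆ S) :
    openNbhd G P.support ⊆ openNbhd G (openNbhd G S) :=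
  openNbhd_mono (P.claws_subset_openNbhd_core.trans (openNbhd_mono hS))

theorem mem_openNbhd_core_of_adj_center {i : ι} (h : G.Adj v (P.center i)) :
    v ∈ openNbhd G (P.core Set.univ a) :=
  mem_openNbhd_of_adj (P.center_mem_core trivial) h

theorem mem_openNbhd_core_of_adj_leaf {i : ι} {k : Fin 3} (ha : a i = k)
    (h : G.Adj v (P.leaf i k)) : v ∈ openNbhd G (P.core Set.univ a) :=
  mem_openNbhd_of_adj (ha ▸ P.leaf_mem_core trivial) h

theorem exists_mem_openNbhd_core (hv : v ∈ openNbhd G P.support) :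
    ∃ a, v ∈ openNbhd G (P.core Set.univ a) := by
  obtain ⟨x, hx, hxv⟩ := hv
  obtain ⟨a, ha⟩ := P.exists_mem_core hx
  exact ⟨a, x, ha, hxv⟩

theorem exists_forall_mem_openNbhd_core_of_forall_adj (hG : NTDExtremal G)
    (hv : ∀ w, G.Adj v w → w ∈ P.support) : ∃ x y : ι × Fin 3, x ≠ y ∧
      ∀ a : ι → Fin 3, a x.1 = x.2 ∨ a y.1 = y.2 → v ∈ openNbhd G (P.core Set.univ a) := by
  by_cases! hcenter : ∃ i, G.Adj v (P.center i)
  · obtain ⟨i, hi⟩ := hcenter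
    exact ⟨(i, 0), (i, 1), by simp, fun a _ ↦ mem_openNbhd_core_of_adj_center hi⟩
  · have hleaf {w : V} (h : G.Adj v w) : ∃ i k, w = P.leaf i k := by
      obtain ⟨i, -, rfl | hk⟩ := P.mem_claws.1 (hv w h)
      exacts [absurd h (hcenter i), ⟨i, hk⟩]
    obtain ⟨w, hw, -⟩ := hG.exists_adj_ne v v
    obtain ⟨w', hw', hne⟩ := hG.exists_adj_ne v w
    obtain ⟨i, k, rfl⟩ := hleaf hw
    obtain ⟨j, l, rfl⟩ := hleaf hw'
    refine ⟨(i, k), (j, l), fun h ↦ hne ?_, fun a ha ↦ ?_⟩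
    · obtain ⟨rfl, rfl⟩ := Prod.ext_iff.1 h
      rfl
    · obtain ha | ha := ha
      exacts [mem_openNbhd_core_of_adj_leaf ha hw, mem_openNbhd_core_of_adj_leaf ha hw']

theorem exists_forall_verts_subset_openNbhd_core [Finite V] (hG : NTDExtremal G)
    (hc : (P.verts c).ncard ≤ 1) : ∃ x y : ι × Fin 3, x ≠ y ∧
      ∀ a : ι → Fin 3, a x.1 = x.2 ∨ a y.1 = y.2 → P.verts c ⊆ openNbhd G (P.core Set.univ a) := by
  obtain ⟨v, hv⟩ := c.nonempty_supp.image Subtype.val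
  have hsub : P.verts c ⊆ {v} := fun w hw ↦
    (Set.ncard_le_one (Set.toFinite _)).1 hc w hw v hv
  have hadj (w : V) (hw : G.Adj v w) : w ∈ P.support :=
    (mem_support_or_mem_verts_of_adj hv hw).resolve_right fun h ↦ hw.ne (hsub h).symm
  obtain ⟨x, y, hxy, h⟩ := exists_forall_mem_openNbhd_core_of_forall_adj hG hadj
  exact ⟨x, y, hxy, fun a ha ↦ hsub.trans (Set.singleton_subset_iff.2 (h a ha))⟩

variable [Finite V] [Nonempty ι]

theorem IsSaturated.exists_ntDominates_verts (hP : P.IsSaturated) (hG : NTDExtremal G)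
    (a : ι → Fin 3) (c : P.Piece) :
    ∃ Q : Set V, NTDominates G (P.core Set.univ a ∪ Q) (P.verts c) ∧
      Q.ncard ≤ ((P.verts c).ncard + 2) / 3 := by
  obtain ⟨u, v, p, hp, hc, hu, hv⟩ := hP.exists_spanning_path_piece hG c
  have hN := support_subset_openNbhd_openNbhd (G := G) (P := P) (a := a)
    (Set.subset_union_left (t := pathDomSet p))
  refine ⟨pathDomSet p, hc ▸ ntDominates_support_of_pathDomSet_subset Set.subset_union_right
    (.inr (hN hu)) (hv.imp_left (hN ·)), ?_⟩
  rw [← hc, ncard_support_of_isPath hp]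
  exact ncard_pathDomSet_le p

theorem IsSaturated.two_le_ncard_verts [Finite ι] (hP : P.IsSaturated) (hG : NTDExtremal G)
    (c : P.Piece) : 2 ≤ (P.verts c).ncard := by
  classical
  have := Fintype.ofFinite ι
  have := Fintype.ofFinite P.Piece
  by_contra! hc
  let single : Finset P.Piece := {c | (P.verts c).ncard ≤ 1}
  have hpair (c : P.Piece) : ∃ x y : ι × Fin 3, c ∈ single → x ≠ y ∧ ∀ a : ι → Fin 3,
      a x.1 = x.2 ∨ a y.1 = y.2 → P.verts c ⊆ openNbhd G (P.core Set.univ a) := by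
    by_cases hc : c ∈ single
    · obtain ⟨x, y, h⟩ := exists_forall_verts_subset_openNbhd_core hG (by simpa [single] using hc)
      exact ⟨x, y, fun _ ↦ h⟩
    · exact ⟨(Classical.arbitrary ι, 0), (Classical.arbitrary ι, 0), fun h ↦ absurd h hc⟩
  choose f g hfg using hpair
  obtain ⟨a, ha⟩ := exists_two_mul_card_filter_ne_and_ne_lt (s := single)
    ⟨c, by simpa [single] using Nat.le_of_lt_succ hc⟩ fun c hc ↦ (hfg c hc).1
  set missed := single.filter fun c ↦ a (f c).1 ≠ (f c).2 ∧ a (g c).1 ≠ (g c).2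
  have hcost (c : P.Piece) : ∃ Q : Set V, NTDominates G (P.core Set.univ a ∪ Q) (P.verts c) ∧
      2 * Q.ncard + (if c ∈ single then 1 else 0) ≤
        (P.verts c).ncard + if c ∈ missed then 2 else 0 := by
    have hpos : 1 ≤ (P.verts c).ncard :=
      (Set.ncard_pos (Set.toFinite _)).2 (c.nonempty_supp.image _)
    by_cases hhit : c ∈ single ∧ c ∉ missed
    · refine ⟨∅, ?_, by simpa [hhit] using hpos⟩
      rw [Set.union_empty]
      refine P.ntDominates_of_subset_openNbhd_core ((hfg c hhit.1).2 a ?_)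
      simpa [missed, hhit.1, or_iff_not_imp_left] using hhit.2
    · obtain ⟨Q, hQ, hle⟩ := hP.exists_ntDominates_verts hG a c
      refine ⟨Q, hQ, ?_⟩
      have : c ∈ single ↔ (P.verts c).ncard ≤ 1 := by simp [single]
      split_ifs <;> grind
  choose Q hQ hle using hcost
  have hsum := Finset.sum_le_sum fun c (_ : c ∈ Finset.univ) ↦ hle c
  have htotal := sum_ncard_verts_le hG hQ
  simp only [Finset.sum_add_distrib, ← Finset.mul_sum, Finset.sum_ite_mem, Finset.univ_inter,
    Finset.sum_const, smul_eq_mul] at hsum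
  omega

theorem IsSaturated.ncard_verts_le [Finite ι] (hP : P.IsSaturated) (hG : NTDExtremal G)
    (a : ι → Fin 3) {Q : Set V} (hQ : NTDominates G (P.core Set.univ a ∪ Q) (P.verts c)) :
    (P.verts c).ncard ≤ 2 * Q.ncard := by
  classical
  have := Fintype.ofFinite P.Piece
  by_contra! hlt
  have hcheap (d : P.Piece) : ∃ Q : Set V, NTDominates G (P.core Set.univ a ∪ Q) (P.verts d) ∧
      2 * Q.ncard ≤ (P.verts d).ncard ∧ (d = c → 2 * Q.ncard < (P.verts d).ncard) := by
    obtain rfl | hd := eq_or_ne d c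
    · exact ⟨Q, hQ, hlt.le, fun _ ↦ hlt⟩
    · obtain ⟨R, hR, hle⟩ := hP.exists_ntDominates_verts hG a d
      have := hP.two_le_ncard_verts hG d
      exact ⟨R, hR, by omega, fun h ↦ absurd h hd⟩
  choose R hR hle hRc using hcheap
  have hsum : ∑ d, 2 * (R d).ncard < ∑ d, (P.verts d).ncard :=
    Finset.sum_lt_sum (fun d _ ↦ hle d) ⟨c, Finset.mem_univ c, hRc c rfl⟩
  rw [← Finset.mul_sum] at hsum
  exact hsum.not_ge (sum_ncard_verts_le hG hR)

-- A piece `p₀ p₁ p₂ p₃` would be handled by `p₂` alone, once a leaf next to `p₀` is selected.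
theorem IsSaturated.ncard_verts_ne_four [Finite ι] (hP : P.IsSaturated) (hG : NTDExtremal G)
    (c : P.Piece) : (P.verts c).ncard ≠ 4 := by
  intro h4
  obtain ⟨u, v, p, hp, hc, hu, hv⟩ := hP.exists_spanning_path_piece hG c
  have hlen : p.length = 3 := by
    have := ncard_support_of_isPath hp
    rw [hc] at this
    omega
  obtain ⟨a, ha⟩ := exists_mem_openNbhd_core hu
  set S := P.core Set.univ a ∪ {p.getVert 2}
  have hS : P.core Set.univ a ⊆ S := Set.subset_union_left
  have h2 : p.getVert 2 ∈ S := .inr rfl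
  have hN := support_subset_openNbhd_openNbhd hS
  have huN : u ∈ openNbhd G S := openNbhd_mono hS ha
  have hvu : v ∈ openNbhd G (openNbhd G S) := hv.elim (hN ·) (mem_openNbhd_of_adj huN)
  have hdom : NTDominates G S (P.verts c) := by
    rw [← hc]
    intro w hw hwS
    obtain ⟨i, rfl, hi⟩ := Walk.mem_support_iff_exists_getVert.1 hw
    obtain rfl | rfl | rfl | rfl : i = 0 ∨ i = 1 ∨ i = 2 ∨ i = 3 := by omega
    · simpa using ⟨huN, hN hu⟩
    · exact ⟨getVert_mem_openNbhd (.inr rfl) hi (by omega) h2,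
        getVert_mem_openNbhd (j := 0) (.inl rfl) hi (by omega) (by simpa using huN)⟩
    · exact absurd h2 hwS
    · exact ⟨getVert_mem_openNbhd (.inl rfl) hi (by omega) h2,
        by simpa [← hlen] using hvu⟩
  have := hP.ncard_verts_le hG a hdom
  rw [h4, Set.ncard_singleton] at this
  omega

theorem IsSaturated.ncard_verts_eq_two [Finite ι] (hP : P.IsSaturated) (hG : NTDExtremal G)
    (c : P.Piece) : (P.verts c).ncard = 2 := by
  obtain ⟨Q, hQ, hle⟩ := hP.exists_ntDominates_verts hG (fun _ ↦ 0) c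
  have h1 := hP.ncard_verts_le hG _ hQ
  have h2 := hP.two_le_ncard_verts hG c
  have h3 := hP.ncard_verts_ne_four hG c
  omega

end PieceSize

section Mates

variable {G : SimpleGraph V} {ι : Type*} {P : ClawPacking G ι} {i j : ι} {k l : Fin 3} {u v w : V}

/-- Two adjacent vertices lying outside all claws of the packing. In the extremal situation the
pieces are exactly the pairs of mates. -/
def Mates (P : ClawPacking G ι) (u w : V) : Prop := u ∉ P.support ∧ w ∉ P.support ∧ G.Adj u w

theorem Mates.symm (h : P.Mates u w) : P.Mates w u :=
  ⟨h.2.1, h.1, h.2.2.symm⟩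

variable [Finite V] [Nonempty ι] [Finite ι]

theorem IsSaturated.exists_mates_verts_eq (hP : P.IsSaturated) (hG : NTDExtremal G)
    (c : P.Piece) : ∃ u w, P.Mates u w ∧ P.verts c = {u, w} := by
  obtain ⟨u, w, p, hp, hc, -⟩ := hP.exists_spanning_path_piece hG c
  have htwo := hP.ncard_verts_eq_two hG c
  have hadj : G.Adj u w := by
    refine p.adj_of_length_eq_one ?_
    have := ncard_support_of_isPath hp
    rw [hc] at this
    omega
  have hu : u ∈ P.verts c := hc ▸ p.start_mem_support
  have hw : w ∈ P.verts c := hc ▸ p.end_mem_support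
  refine ⟨u, w, ⟨notMem_support_of_mem_verts hu, notMem_support_of_mem_verts hw, hadj⟩,
    (Set.eq_of_subset_of_ncard_le (Set.pair_subset hu hw) ?_ (Set.toFinite _)).symm⟩
  rw [htwo, Set.ncard_pair hadj.ne]

theorem IsSaturated.exists_mates (hP : P.IsSaturated) (hG : NTDExtremal G) (hu : u ∉ P.support) :
    ∃ w, P.Mates u w := by
  obtain ⟨c, hc⟩ := exists_mem_verts hu
  obtain ⟨x, y, hxy, hcxy⟩ := hP.exists_mates_verts_eq hG c
  rw [hcxy] at hc
  obtain rfl | rfl := hc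
  exacts [⟨y, hxy⟩, ⟨x, hxy.symm⟩]

theorem IsSaturated.mates_right_unique (hP : P.IsSaturated) (hG : NTDExtremal G)
    (hv : P.Mates u v) (hw : P.Mates u w) : v = w := by
  obtain ⟨c, hc⟩ := exists_mem_verts hv.1
  have htwo := hP.ncard_verts_eq_two hG c
  by_contra hne
  have h3 : 2 < (P.verts c).ncard := (Set.two_lt_ncard_iff (Set.toFinite _)).2
    ⟨u, v, w, hc, mem_verts_of_adj hc hv.2.1 hv.2.2, mem_verts_of_adj hc hw.2.1 hw.2.2,
      hv.2.2.ne, hw.2.2.ne, hne⟩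
  omega

theorem IsSaturated.exists_adj_mem_support (hP : P.IsSaturated) (hG : NTDExtremal G)
    (hu : u ∉ P.support) : ∃ x ∈ P.support, G.Adj u x := by
  obtain ⟨w, huw⟩ := hP.exists_mates hG hu
  obtain ⟨x, hx, hxw⟩ := hG.exists_adj_ne u w
  exact ⟨x, not_not.1 fun hxP ↦ hxw (hP.mates_right_unique hG ⟨hu, hxP, hx⟩ huw), hx⟩

theorem IsSaturated.notMem_openNbhd_core (hP : P.IsSaturated) (hG : NTDExtremal G)
    (huw : P.Mates u w) {a : ι → Fin 3} (hu : u ∈ openNbhd G (P.core Set.univ a)) :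
    w ∉ openNbhd G (P.core Set.univ a) := by
  intro hw
  obtain ⟨c, hc⟩ := exists_mem_verts huw.1
  have hpair : {u, w} = P.verts c := by
    refine Set.eq_of_subset_of_ncard_le
      (Set.pair_subset hc (mem_verts_of_adj hc huw.2.1 huw.2.2)) ?_ (Set.toFinite _)
    rw [hP.ncard_verts_eq_two hG c, Set.ncard_pair huw.2.2.ne]
  have hdom := P.ntDominates_of_subset_openNbhd_core (hpair ▸ Set.pair_subset hu hw)
  rw [← Set.union_empty (P.core _ _)] at hdom
  have hle := hP.ncard_verts_le hG a hdom
  rw [hP.ncard_verts_eq_two hG c, Set.ncard_empty] at hle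
  omega

theorem IsSaturated.not_adj_center (hP : P.IsSaturated) (hG : NTDExtremal G)
    (hu : u ∉ P.support) (i : ι) : ¬G.Adj u (P.center i) := by
  intro h
  obtain ⟨w, huw⟩ := hP.exists_mates hG hu
  obtain ⟨x, hx, hwx⟩ := hP.exists_adj_mem_support hG huw.2.1
  obtain ⟨a, ha⟩ := exists_mem_openNbhd_core (mem_openNbhd_of_adj hx hwx)
  exact hP.notMem_openNbhd_core hG huw (mem_openNbhd_core_of_adj_center h) ha

theorem IsSaturated.exists_adj_leaf (hP : P.IsSaturated) (hG : NTDExtremal G)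
    (hu : u ∉ P.support) : ∃ i k, G.Adj u (P.leaf i k) := by
  obtain ⟨x, hx, hux⟩ := hP.exists_adj_mem_support hG hu
  obtain ⟨i, -, rfl | ⟨k, rfl⟩⟩ := P.mem_claws.1 hx
  exacts [absurd hux (hP.not_adj_center hG hu i), ⟨i, k, hux⟩]

-- Otherwise both leaves could be selected at once, and would handle `u` and `w` for free.
theorem IsSaturated.eq_and_ne_of_mates (hP : P.IsSaturated) (hG : NTDExtremal G)
    (huw : P.Mates u w) (hu : G.Adj u (P.leaf i k)) (hw : G.Adj w (P.leaf j l)) :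
    i = j ∧ k ≠ l := by
  classical
  by_contra! h
  let a : ι → Fin 3 := fun t ↦ if t = i then k else l
  have hi : a i = k := if_pos rfl
  have hj : a j = l := by
    by_cases hij : i = j
    · simp [a, h hij]
    · simp [a, Ne.symm hij]
  exact hP.notMem_openNbhd_core hG huw (mem_openNbhd_core_of_adj_leaf hi hu)
    (mem_openNbhd_core_of_adj_leaf hj hw)

end Mates

section Transversals

variable {G : SimpleGraph V} {ι : Type*} {P : ClawPacking G ι} {i : ι} {k l : Fin 3} {u v w : V}
  {B : Set V}

/-- A choice of one vertex from every pair of mates. -/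
structure IsTransversal (P : ClawPacking G ι) (B : Set V) : Prop where
  subset_compl : B ⊆ P.supportᶜ
  exists_mates : ∀ u ∉ P.support, u ∉ B → ∃ w ∈ B, P.Mates u w
  card_eq : Nat.card V = 4 * Nat.card ι + 2 * B.ncard

/-- The neighbors of a leaf of a claw other than the center of that claw. -/
def leafNbhd (P : ClawPacking G ι) (i : ι) (k : Fin 3) : Set V :=
  G.neighborSet (P.leaf i k) \ {P.center i}

theorem leafNbhd_nonempty (hG : NTDExtremal G) (i : ι) (k : Fin 3) : (P.leafNbhd i k).Nonempty :=
  hG.exists_adj_ne _ _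

theorem mem_leafNbhd (hu : u ∉ P.support) : u ∈ P.leafNbhd i k ↔ G.Adj u (P.leaf i k) :=
  ⟨fun h ↦ h.1.symm, fun h ↦ ⟨h.symm, P.ne_center hu i⟩⟩

theorem mem_claws_or_mem_claws_compl (hv : v ∈ P.support) (i : ι) :
    (v = P.center i ∨ ∃ k, v = P.leaf i k) ∨ v ∈ P.claws {i}ᶜ := by
  obtain ⟨j, -, h⟩ := P.mem_claws.1 hv
  obtain rfl | hj := eq_or_ne j i
  exacts [.inl h, .inr (P.mem_claws.2 ⟨j, hj, h⟩)]

theorem ncard_core_compl_le [Finite ι] (i : ι) (a : ι → Fin 3) :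
    (P.core {i}ᶜ a).ncard + 2 ≤ 2 * Nat.card ι := by
  have h := P.ncard_core_le (I := {i}ᶜ) (a := a)
  have := Set.ncard_add_ncard_compl ({i} : Set ι)
  rw [Set.ncard_singleton] at this
  omega

variable [Finite V] [Nonempty ι] [Finite ι]

theorem IsSaturated.exists_isTransversal_disjoint (hP : P.IsSaturated) (hG : NTDExtremal G)
    {F : Set V} (hF : ∀ u ∈ F, ∀ w ∈ F, ¬P.Mates u w) : ∃ B, P.IsTransversal B ∧ Disjoint B F := by
  classical
  have := Fintype.ofFinite P.Piece
  have hmem (c : P.Piece) : ∃ u ∈ P.verts c, u ∉ F := by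
    obtain ⟨u, w, huw, hc⟩ := hP.exists_mates_verts_eq hG c
    by_cases hu : u ∈ F
    · exact ⟨w, hc ▸ .inr rfl, fun hw ↦ hF u hu w hw huw⟩
    · exact ⟨u, hc ▸ .inl rfl, hu⟩
  choose f hf hfF using hmem
  have hinj : Function.Injective f := by
    intro c d h
    obtain ⟨x, hx, hxc⟩ := hf c
    obtain ⟨y, hy, hyd⟩ := hf d
    obtain rfl := Subtype.ext (hxc.trans (h.trans hyd.symm))
    exact hx.symm.trans hy
  refine ⟨Set.range f, ⟨?_, fun u hu huB ↦ ?_, ?_⟩, ?_⟩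
  · rintro _ ⟨c, rfl⟩
    exact notMem_support_of_mem_verts (hf c)
  · obtain ⟨c, hc⟩ := exists_mem_verts hu
    obtain ⟨x, y, hxy, hcxy⟩ := hP.exists_mates_verts_eq hG c
    have hfc := hf c
    have hne : f c ≠ u := fun h ↦ huB ⟨c, h⟩
    rw [hcxy] at hc hfc
    refine ⟨f c, ⟨c, rfl⟩, ?_⟩
    obtain rfl | rfl := hc <;> obtain h | h := hfc
    exacts [absurd h hne, h ▸ hxy, h ▸ hxy.symm, absurd h hne]
  · rw [card_eq_add_sum_ncard_verts (P := P), Finset.sum_congr rfl fun c _ ↦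
      hP.ncard_verts_eq_two hG c, ← Set.image_univ, Set.ncard_image_of_injective _ hinj,
      Set.ncard_univ, Finset.sum_const, Finset.card_univ, ← Nat.card_eq_fintype_card, smul_eq_mul,
      mul_comm 2]
  · rw [Set.disjoint_left]
    rintro _ ⟨c, rfl⟩
    exact hfF c

theorem IsSaturated.exists_isTransversal (hP : P.IsSaturated) (hG : NTDExtremal G) :
    ∃ B, P.IsTransversal B :=
  (hP.exists_isTransversal_disjoint hG (F := ∅) (by simp)).imp fun _ ↦ And.left

theorem IsTransversal.mem_or_mem (hB : P.IsTransversal B) (hP : P.IsSaturated)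
    (hG : NTDExtremal G) (h : P.Mates u w) : u ∈ B ∨ w ∈ B := by
  refine or_iff_not_imp_left.2 fun hu ↦ ?_
  obtain ⟨x, hx, hux⟩ := hB.exists_mates u h.1 hu
  exact hP.mates_right_unique hG hux h ▸ hx

-- The failure of `{center i} ∪ core {i}ᶜ a ∪ B`, which is too small to be an NTD-set.
theorem IsTransversal.exists_leafNbhd_subset (hB : P.IsTransversal B) (hP : P.IsSaturated)
    (hG : NTDExtremal G) (i : ι) (a : ι → Fin 3) :
    P.center i ∉ openNbhd G (P.core {i}ᶜ a) ∧ ∃ k, P.leafNbhd i k ⊆ B := by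
  set S := insert (P.center i) (P.core {i}ᶜ a ∪ B)
  have hcenter : P.center i ∈ S := .inl rfl
  have hcore : P.core {i}ᶜ a ⊆ S := fun x hx ↦ .inr (.inl hx)
  have hclaws : P.claws {i}ᶜ ⊆ openNbhd G S :=
    P.claws_subset_openNbhd_core.trans (openNbhd_mono hcore)
  have hleaf (k : Fin 3) : P.leaf i k ∈ openNbhd G S := ⟨_, hcenter, P.adj i k⟩
  have hN (y : V) (hy : y ≠ P.center i) (hyB : y ∉ B) : y ∈ openNbhd G S := by
    by_cases hyP : y ∈ P.support
    · obtain (h | ⟨k, rfl⟩) | h := mem_claws_or_mem_claws_compl hyP i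
      exacts [absurd h hy, hleaf k, hclaws h]
    · obtain ⟨w, hw, hyw⟩ := hB.exists_mates y hyP hyB
      exact mem_openNbhd_of_adj (.inr (.inr hw)) hyw.2.2
  by_contra! h
  have hdom : NTDominates G S Set.univ := by
    intro v _ hvS
    have hvc : v ≠ P.center i := fun h ↦ hvS (h ▸ hcenter)
    refine ⟨hN v hvc fun h ↦ hvS (.inr (.inr h)), ?_⟩
    by_cases hv : v ∈ P.support
    · obtain (h' | ⟨k, rfl⟩) | h' := mem_claws_or_mem_claws_compl hv i
      · exact absurd h' hvc
      · by_cases hi : P.center i ∈ openNbhd G (P.core {i}ᶜ a)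
        · exact ⟨_, openNbhd_mono hcore hi, P.adj i k⟩
        · obtain ⟨y, hy, hyB⟩ := Set.not_subset.1 (h hi k)
          exact ⟨y, hN y hy.2 hyB, hy.1.symm⟩
      · exact openNbhd_mono (openNbhd_mono hcore)
          (P.openNbhd_core_subset (P.claws_subset_openNbhd_core h'))
    · obtain ⟨j, k, hvl⟩ := hP.exists_adj_leaf hG hv
      exact mem_openNbhd_of_adj (hN _ (P.center_ne_leaf i j k).symm
        fun h ↦ hB.subset_compl h (P.leaf_mem_claws (Set.mem_univ j) k)) hvl
  have hcard := hG.card_le_of_ntDominates hdom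
  grw [Set.ncard_insert_le, Set.ncard_union_le, hB.card_eq] at hcard
  have := ncard_core_compl_le (P := P) i a
  omega

end Transversals

section Uniqueness

variable {G : SimpleGraph V} {ι : Type*} {P : ClawPacking G ι} {i : ι} {k : Fin 3} {u v : V}
  [Finite V] [Nonempty ι] [Finite ι]

theorem IsSaturated.exists_eq_leaf_of_adj_center (hP : P.IsSaturated) (hG : NTDExtremal G)
    (h : G.Adj (P.center i) v) : ∃ k, v = P.leaf i k := by
  have hv : v ∈ P.support := not_not.1 fun hv ↦ hP.not_adj_center hG hv i h.symm
  obtain (rfl | hk) | hv := mem_claws_or_mem_claws_compl hv i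
  · exact absurd h G.irrefl
  · exact hk
  · obtain ⟨a, ha⟩ := P.exists_mem_core hv
    obtain ⟨B, hB⟩ := hP.exists_isTransversal hG
    exact absurd (mem_openNbhd_of_adj ha h) (hB.exists_leafNbhd_subset hP hG i a).1

theorem IsSaturated.exists_mates_of_mem_leafNbhd (hP : P.IsSaturated) (hG : NTDExtremal G)
    {y : Fin 3 → V} (hy : ∀ k, y k ∈ P.leafNbhd i k) : ∃ k l, P.Mates (y k) (y l) := by
  by_contra! h
  obtain ⟨B, hB, hdisj⟩ := hP.exists_isTransversal_disjoint hG (F := Set.range y) (by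
    rintro _ ⟨k, rfl⟩ _ ⟨l, rfl⟩
    exact h k l)
  obtain ⟨-, k, hk⟩ := hB.exists_leafNbhd_subset hP hG i fun _ ↦ 0
  exact Set.disjoint_left.1 hdisj (hk (hy k)) ⟨k, rfl⟩

theorem IsSaturated.exists_mem_leafNbhd_mem_claws_compl [Nontrivial ι] (hP : P.IsSaturated)
    (hG : NTDExtremal G) (i : ι) : ∃ k, ∃ y ∈ P.leafNbhd i k, y ∈ P.claws {i}ᶜ := by
  by_contra! h
  let A : Set V := P.claws {i} ∪ {u | u ∉ P.support ∧ ∃ k, G.Adj u (P.leaf i k)}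
  have hclosed : ∀ u ∈ A, ∀ w, G.Adj u w → w ∈ A := by
    rintro u (hu | ⟨hu, k, huk⟩) w huw
    · obtain ⟨j, rfl, rfl | ⟨k, rfl⟩⟩ := P.mem_claws.1 hu
      · obtain ⟨k, rfl⟩ := hP.exists_eq_leaf_of_adj_center hG huw
        exact .inl (P.leaf_mem_claws (Set.mem_singleton _) k)
      · by_cases hw : w ∈ P.support
        · obtain hw | hw := mem_claws_or_mem_claws_compl hw j
          · exact .inl (P.mem_claws.2 ⟨j, rfl, hw⟩)
          · have hne : w ≠ P.center j := by
              rintro rfl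
              exact (P.center_mem_claws_iff (I := {j}ᶜ)).1 hw rfl
            exact absurd hw (h k w ⟨huw, hne⟩)
        · exact .inr ⟨hw, k, huw.symm⟩
    · obtain ⟨u', huu'⟩ := hP.exists_mates hG hu
      obtain ⟨j, l, hu'l⟩ := hP.exists_adj_leaf hG huu'.2.1
      obtain ⟨rfl, -⟩ := hP.eq_and_ne_of_mates hG huu' huk hu'l
      by_cases hw : w ∈ P.support
      · obtain ⟨j, -, rfl | ⟨l', rfl⟩⟩ := P.mem_claws.1 hw
        · exact absurd huw (hP.not_adj_center hG hu j)
        · obtain ⟨rfl, -⟩ := hP.eq_and_ne_of_mates hG huu' huw hu'l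
          exact .inl (P.leaf_mem_claws (Set.mem_singleton _) l')
      · obtain rfl := hP.mates_right_unique hG huu' ⟨hu, hw, huw⟩
        exact .inr ⟨hw, l, hu'l⟩
  obtain ⟨j, hj⟩ := exists_ne i
  obtain hc | ⟨hc, -⟩ := mem_of_adj_closed hG.connected (.inl (P.center_mem_claws rfl)) hclosed
    (P.center j)
  · exact hj ((P.center_mem_claws_iff (I := {i})).1 hc)
  · exact hc (P.center_mem_claws trivial)

theorem IsSaturated.exists_leafNbhd_eq_singleton (hP : P.IsSaturated) (hG : NTDExtremal G)
    {k₀ : Fin 3} {z : V} (hz : z ∈ P.leafNbhd i k₀) (hzP : z ∈ P.support) :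
    ∃ y : Fin 3 → V, (∀ k ≠ k₀, P.leafNbhd i k = {y k}) ∧
      ∀ k ≠ k₀, ∀ l ≠ k₀, k ≠ l → P.Mates (y k) (y l) := by
  have hmates {y : Fin 3 → V} (hy : ∀ k ≠ k₀, y k ∈ P.leafNbhd i k) {k l : Fin 3} (hk : k ≠ k₀)
      (hl : l ≠ k₀) (hkl : k ≠ l) : P.Mates (y k) (y l) := by
    obtain ⟨s, t, hst⟩ := hP.exists_mates_of_mem_leafNbhd hG (i := i)
      (y := Function.update y k₀ z) (fun s ↦ by
        obtain rfl | hs := eq_or_ne s k₀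
        · simpa using hz
        · simpa [hs] using hy s hs)
    have hne {s : Fin 3} (hs : Function.update y k₀ z s ∉ P.support) : s ≠ k₀ := by
      rintro rfl
      exact hs (by simpa using hzP)
    have hs := hne hst.1
    have ht := hne hst.2.1
    rw [Function.update_of_ne hs, Function.update_of_ne ht] at hst
    have hne : s ≠ t := fun h ↦ hst.2.2.ne (congrArg y h)
    obtain ⟨rfl, rfl⟩ | ⟨rfl, rfl⟩ : s = k ∧ t = l ∨ s = l ∧ t = k := by omega
    exacts [hst, hst.symm]
  choose y hy using fun k ↦ P.leafNbhd_nonempty hG i k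
  refine ⟨y, fun k hk ↦ ?_, fun k hk l hl ↦ hmates (fun k _ ↦ hy k) hk hl⟩
  refine Set.Subset.antisymm (fun x hx ↦ ?_) (Set.singleton_subset_iff.2 (hy k))
  obtain ⟨l, hl, hlk⟩ : ∃ l, l ≠ k₀ ∧ l ≠ k := Fin.exists_ne_and_ne_of_two_lt k₀ k (by decide)
  have hx' := hmates (y := Function.update y k x) (fun s _ ↦ by
    obtain rfl | hs := eq_or_ne s k
    · simpa using hx
    · simpa [hs] using hy s) hl hk hlk
  rw [Function.update_self, Function.update_of_ne hlk] at hx'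
  exact hP.mates_right_unique hG hx' (hmates (fun k _ ↦ hy k) hl hk hlk)

theorem IsTransversal.exists_mates_mem_diff {B Y : Set V} (hB : P.IsTransversal B)
    (hP : P.IsSaturated) (hG : NTDExtremal G) (hY : ∀ u ∈ Y, ∃ w ∈ Y, P.Mates u w)
    (hv : v ∉ P.support) (hvB : v ∉ B) (hvY : v ∉ Y) : ∃ w ∈ B \ Y, P.Mates v w := by
  obtain ⟨w, hwB, hvw⟩ := hB.exists_mates v hv hvB
  refine ⟨w, ⟨hwB, fun hwY ↦ hvY ?_⟩, hvw⟩
  obtain ⟨u, huY, hwu⟩ := hY w hwY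
  exact hP.mates_right_unique hG hwu hvw.symm ▸ huY

theorem IsTransversal.ntDominates_of_leafNbhd_eq_singleton {B : Set V} (hB : P.IsTransversal B)
    (hP : P.IsSaturated) (hG : NTDExtremal G) {a : ι → Fin 3} {k₀ : Fin 3} {z : V}
    (hz : z ∈ P.leafNbhd i k₀) (hza : z ∈ P.core {i}ᶜ a) {y : Fin 3 → V}
    (hy : ∀ k ≠ k₀, P.leafNbhd i k = {y k})
    (hmates : ∀ k ≠ k₀, ∀ l ≠ k₀, k ≠ l → P.Mates (y k) (y l)) :
    NTDominates G (P.leaf i '' {k₀}ᶜ ∪ (P.core {i}ᶜ a ∪ B \ y '' {k₀}ᶜ)) Set.univ := by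
  set S := P.leaf i '' {k₀}ᶜ ∪ (P.core {i}ᶜ a ∪ B \ y '' {k₀}ᶜ)
  have hleaf {k : Fin 3} (hk : k ≠ k₀) : P.leaf i k ∈ S := .inl ⟨k, hk, rfl⟩
  have hcore : P.core {i}ᶜ a ⊆ S := fun x hx ↦ .inr (.inl hx)
  have hclaws : P.claws {i}ᶜ ⊆ openNbhd G S :=
    P.claws_subset_openNbhd_core.trans (openNbhd_mono hcore)
  have hleaf₀ : P.leaf i k₀ ∈ openNbhd G S := mem_openNbhd_of_adj (hcore hza) hz.1
  have hyadj {k : Fin 3} (hk : k ≠ k₀) : G.Adj (P.leaf i k) (y k) :=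
    ((hy k hk).ge (Set.mem_singleton _)).1
  have hother (k : Fin 3) : ∃ l, l ≠ k₀ ∧ l ≠ k := Fin.exists_ne_and_ne_of_two_lt k₀ k (by decide)
  intro v _ hvS
  by_cases hv : v ∈ P.support
  · obtain (rfl | ⟨k, rfl⟩) | hv := mem_claws_or_mem_claws_compl hv i
    · obtain ⟨l, hl, -⟩ := hother k₀
      exact ⟨mem_openNbhd_of_adj (hleaf hl) (P.adj i l), mem_openNbhd_of_adj hleaf₀ (P.adj i k₀)⟩
    · obtain rfl : k = k₀ := not_not.1 fun hk ↦ hvS (hleaf hk)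
      exact ⟨hleaf₀, mem_openNbhd_of_adj (hclaws (P.core_subset_claws hza)) hz.1⟩
    · exact ⟨hclaws hv, openNbhd_mono (openNbhd_mono hcore)
        (P.openNbhd_core_subset (P.claws_subset_openNbhd_core hv))⟩
  have hY : ∀ u ∈ y '' {k₀}ᶜ, ∃ w ∈ y '' {k₀}ᶜ, P.Mates u w := by
    rintro _ ⟨k, hk, rfl⟩
    obtain ⟨l, hl, hlk⟩ := hother k
    exact ⟨_, ⟨l, hl, rfl⟩, hmates k hk l hl hlk.symm⟩
  have hYS : y '' {k₀}ᶜ ⊆ openNbhd G S := by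
    rintro _ ⟨k, hk, rfl⟩
    exact ⟨_, hleaf hk, hyadj hk⟩
  by_cases hvy : v ∈ y '' {k₀}ᶜ
  · obtain ⟨w, hw, hvw⟩ := hY v hvy
    exact ⟨hYS hvy, mem_openNbhd_of_adj (hYS hw) hvw.2.2⟩
  · obtain ⟨w, hw, hvw⟩ := hB.exists_mates_mem_diff hP hG hY hv
      (fun h ↦ hvS (.inr (.inr ⟨h, hvy⟩))) hvy
    refine ⟨mem_openNbhd_of_adj (.inr (.inr hw)) hvw.2.2, ?_⟩
    obtain ⟨j, k, hvk⟩ := hP.exists_adj_leaf hG hv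
    refine mem_openNbhd_of_adj ?_ hvk
    obtain rfl | hj := eq_or_ne j i
    · obtain rfl : k = k₀ := not_not.1 fun hk ↦
        hvy ⟨k, hk, ((hy k hk).le ((mem_leafNbhd hv).2 hvk)).symm⟩
      exact hleaf₀
    · exact hclaws (P.leaf_mem_claws hj k)

theorem IsSaturated.subsingleton (hP : P.IsSaturated) (hG : NTDExtremal G) : Subsingleton ι := by
  by_contra h
  rw [not_subsingleton_iff_nontrivial] at h
  let i : ι := Classical.arbitrary ι
  obtain ⟨k₀, z, hz, hzi⟩ := hP.exists_mem_leafNbhd_mem_claws_compl hG i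
  obtain ⟨y, hy, hmates⟩ := hP.exists_leafNbhd_eq_singleton hG hz
    (P.claws_mono (Set.subset_univ _) hzi)
  obtain ⟨a, ha⟩ := P.exists_mem_core hzi
  obtain ⟨B, hB⟩ := hP.exists_isTransversal hG
  have hlt : (B \ y '' {k₀}ᶜ).ncard < B.ncard := by
    obtain ⟨k, hk, -⟩ := Fin.exists_ne_and_ne_of_two_lt k₀ k₀ (by decide)
    obtain ⟨l, hl, hlk⟩ := Fin.exists_ne_and_ne_of_two_lt k₀ k (by decide)
    obtain ⟨s, hs, hsB⟩ : ∃ s ≠ k₀, y s ∈ B :=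
      (hB.mem_or_mem hP hG (hmates k hk l hl hlk.symm)).elim (⟨k, hk, ·⟩) (⟨l, hl, ·⟩)
    exact Set.ncard_lt_ncard (Set.sdiff_ssubset_left_iff.2 ⟨_, hsB, s, hs, rfl⟩)
  have hleaves : (P.leaf i '' {k₀}ᶜ).ncard ≤ 2 := by
    grw [Set.ncard_image_le, Set.ncard_compl, Set.ncard_singleton, Nat.card_fin]
  have hcard := hG.card_le_of_ntDominates
    (hB.ntDominates_of_leafNbhd_eq_singleton hP hG hz ha hy hmates)
  have hcore := ncard_core_compl_le (P := P) i a
  grw [Set.ncard_union_le, Set.ncard_union_le, hB.card_eq] at hcard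
  omega

end Uniqueness

end ClawPacking

theorem nonempty_iso_of_neighborSet_eq {W : Type*} [Nonempty W] {G : SimpleGraph V}
    {H : SimpleGraph W} (hG : G.Connected) {f : W → V} (hinj : Function.Injective f)
    (hf : ∀ i, G.neighborSet (f i) = f '' H.neighborSet i) : Nonempty (G ≃g H) :=
  nonempty_iso_of_injective_hom hG ⟨f, fun {i j} h ↦ (hf i).ge ⟨j, h, rfl⟩⟩ hinj
    fun i _ h ↦ (hf i).le h

theorem neighborSet_graphB2 (i : Fin 6) : graphB2.neighborSet i =
    (![{1, 4}, {0, 2, 5}, {1, 3}, {2, 4}, {0, 3, 5}, {1, 4}] i : Finset (Fin 6)) := by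
  ext j
  simp only [mem_neighborSet, graphB2, fromRel_adj, Finset.mem_coe]
  decide +revert

theorem neighborSet_graphB4 (i : Fin 8) : graphB4.neighborSet i =
    (![{1, 4, 7}, {0, 2}, {1, 3}, {2, 4}, {0, 3, 5}, {4, 6}, {5, 7}, {0, 6}] i :
      Finset (Fin 8)) := by
  ext j
  simp only [mem_neighborSet, graphB4, fromRel_adj, Finset.mem_coe]
  decide +revert

theorem neighborSet_graphB5 (i : Fin 8) : graphB5.neighborSet i =
    (![{1, 4, 7}, {0, 2, 5}, {1, 3}, {2, 4}, {0, 3, 5}, {1, 4, 6}, {5, 7}, {0, 6}] i :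
      Finset (Fin 8)) := by
  ext j
  simp only [mem_neighborSet, graphB5, fromRel_adj, Finset.mem_coe]
  decide +revert

namespace ClawPacking

section LeafNeighborhoods

variable {G : SimpleGraph V} {ι : Type*} {P : ClawPacking G ι} {i : ι} {k : Fin 3}
  {a a' b b' u v w : V}

/-- The packing with the leaves of each claw renumbered by `σ`. -/
def permute (P : ClawPacking G ι) (σ : Equiv.Perm (Fin 3)) : ClawPacking G ι where
  center := P.center
  leaf i k := P.leaf i (σ k)
  center_injective := P.center_injective
  leaf_injective _ _ _ _ h := (P.leaf_injective h).imp_right (σ.injective ·)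
  center_ne_leaf i j k := P.center_ne_leaf i j (σ k)
  adj i k := P.adj i (σ k)

theorem claws_permute (σ : Equiv.Perm (Fin 3)) (I : Set ι) : (P.permute σ).claws I = P.claws I := by
  ext x
  rw [mem_claws, mem_claws]
  exact exists_congr fun i ↦ and_congr_right' 
    (or_congr_right (σ.surjective.exists (p := (x = P.leaf i ·))).symm)

theorem IsSaturated.permute (hP : P.IsSaturated) (σ : Equiv.Perm (Fin 3)) :
    (P.permute σ).IsSaturated := by
  rw [IsSaturated, support, claws_permute]
  exact hP

theorem mates_permute (σ : Equiv.Perm (Fin 3)) : (P.permute σ).Mates u w ↔ P.Mates u w := by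
  rw [Mates, support, claws_permute]
  rfl

theorem neighborSet_leaf (i : ι) (k : Fin 3) :
    G.neighborSet (P.leaf i k) = insert (P.center i) (P.leafNbhd i k) :=
  (Set.insert_sdiff_self_of_mem (P.adj i k).symm).symm

variable [Finite V] [Nonempty ι] [Finite ι]

theorem IsSaturated.neighborSet_center (hP : P.IsSaturated) (hG : NTDExtremal G) (i : ι) :
    G.neighborSet (P.center i) = Set.range (P.leaf i) := by
  ext v
  refine ⟨fun h ↦ ?_, ?_⟩
  · obtain ⟨k, rfl⟩ := hP.exists_eq_leaf_of_adj_center hG h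
    exact ⟨k, rfl⟩
  · rintro ⟨k, rfl⟩
    exact P.adj i k

theorem IsSaturated.eq_center_or_leaf (hP : P.IsSaturated) (hG : NTDExtremal G) (i : ι)
    (hv : v ∈ P.support) : v = P.center i ∨ ∃ k, v = P.leaf i k := by
  have := hP.subsingleton hG
  obtain ⟨j, -, h⟩ := P.mem_claws.1 hv
  exact Subsingleton.elim j i ▸ h

theorem IsSaturated.neighborSet_of_mates (hP : P.IsSaturated) (hG : NTDExtremal G)
    (h : P.Mates u w) (i : ι) :
    G.neighborSet u = insert w (P.leaf i '' {k | u ∈ P.leafNbhd i k}) := by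
  ext v
  refine ⟨fun huv ↦ ?_, ?_⟩
  · by_cases hv : v ∈ P.support
    · obtain rfl | ⟨k, rfl⟩ := hP.eq_center_or_leaf hG i hv
      · exact absurd huv (hP.not_adj_center hG h.1 i)
      · exact .inr ⟨k, (mem_leafNbhd h.1).2 huv, rfl⟩
    · exact .inl (hP.mates_right_unique hG ⟨h.1, hv, huv⟩ h)
  · rintro (rfl | ⟨k, hk, rfl⟩)
    exacts [h.2.2, hk.1.symm]

theorem IsSaturated.exists_mem_leafNbhd (hP : P.IsSaturated) (hG : NTDExtremal G)
    (hu : u ∉ P.support) (i : ι) : ∃ k, u ∈ P.leafNbhd i k := by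
  have := hP.subsingleton hG
  obtain ⟨j, k, h⟩ := hP.exists_adj_leaf hG hu
  obtain rfl := Subsingleton.elim j i
  exact ⟨k, (mem_leafNbhd hu).2 h⟩

theorem IsSaturated.notMem_leafNbhd_of_mates (hP : P.IsSaturated) (hG : NTDExtremal G)
    (h : P.Mates u w) (hu : u ∈ P.leafNbhd i k) : w ∉ P.leafNbhd i k :=
  fun hw ↦ (hP.eq_and_ne_of_mates hG h hu.1.symm hw.1.symm).2 rfl

theorem IsSaturated.notMem_support_of_mem_leafNbhd (hP : P.IsSaturated) (hG : NTDExtremal G)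
    (hu : u ∈ P.leafNbhd i k) : u ∉ P.support := by
  intro huP
  obtain rfl | ⟨l, rfl⟩ := hP.eq_center_or_leaf hG i huP
  · exact hu.2 rfl
  choose y hy using fun k ↦ P.leafNbhd_nonempty hG i k
  have hkl : k ≠ l := fun h ↦ hu.1.ne (congrArg _ h)
  have hleaf : P.leaf i k ∈ P.leafNbhd i l := ⟨hu.1.symm, (P.center_ne_leaf i i k).symm⟩
  let z : Fin 3 → V := Function.update (Function.update y k (P.leaf i l)) l (P.leaf i k)
  have hz (s : Fin 3) (hs : z s ∉ P.support) : s ≠ k ∧ s ≠ l := by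
    constructor <;> rintro rfl <;> refine hs ?_
    · simpa [z, hkl] using huP
    · simpa [z] using P.leaf_mem_claws (Set.mem_univ i) k
  obtain ⟨s, t, hst⟩ := hP.exists_mates_of_mem_leafNbhd hG (i := i) (y := z) fun s ↦ by
    by_cases hsl : s = l
    · simpa [z, hsl] using hleaf
    · by_cases hsk : s = k
      · simpa [z, hsk, hkl] using hu
      · simpa [z, hsl, hsk] using hy s
  have hs := hz s hst.1
  have ht := hz t hst.2.1
  obtain rfl : s = t := by omega
  exact G.irrefl hst.2.2

theorem IsSaturated.mates_or_mates_or_mates (hP : P.IsSaturated) (hG : NTDExtremal G)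
    {l m : Fin 3} (hkl : k ≠ l) (hkm : k ≠ m) (hlm : l ≠ m) {x y z : V}
    (hx : x ∈ P.leafNbhd i k) (hy : y ∈ P.leafNbhd i l) (hz : z ∈ P.leafNbhd i m) :
    P.Mates x y ∨ P.Mates x z ∨ P.Mates y z := by
  obtain ⟨s, t, h⟩ := hP.exists_mates_of_mem_leafNbhd hG (i := i)
    (y := fun s ↦ if s = k then x else if s = l then y else z) fun s ↦ by
      obtain rfl | rfl | rfl : s = k ∨ s = l ∨ s = m := by omega
      · simpa only [if_true] using hx
      · simpa only [if_neg hkl.symm, if_true] using hy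
      · simpa only [if_neg hkm.symm, if_neg hlm.symm] using hz
  have hirr (v : V) : ¬P.Mates v v := fun hv ↦ G.irrefl hv.2.2
  split_ifs at h
  exacts [absurd h (hirr x), .inl h, .inr (.inl h), .inl h.symm, absurd h (hirr y), .inr (.inr h),
    .inr (.inl h.symm), .inr (.inr h.symm), absurd h (hirr z)]

theorem IsSaturated.leafNbhd_subset_pair (hP : P.IsSaturated) (hG : NTDExtremal G)
    {l m : Fin 3} (hkl : k ≠ l) (hkm : k ≠ m) (hlm : l ≠ m) (ha : P.Mates a a')
    (hb : P.Mates b b') (hak : a ∈ P.leafNbhd i k) (hbl : b ∈ P.leafNbhd i l) (hab : b ≠ a') :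
    P.leafNbhd i m ⊆ {a', b'} := by
  intro y hy
  obtain h | h | h := hP.mates_or_mates_or_mates hG hkl hkm hlm hak hbl hy
  · exact absurd (hP.mates_right_unique hG h ha) hab
  · exact .inl (hP.mates_right_unique hG h ha)
  · exact .inr (hP.mates_right_unique hG h hb)

end LeafNeighborhoods

section Attachments

variable {G : SimpleGraph V} {ι : Type*} {P : ClawPacking G ι} {i : ι} {a a' b b' : V}

theorem injective_vec_of_mates (ha : P.Mates a a') (hb : P.Mates b b') (hab : a ≠ b)
    (hab' : a ≠ b') (ha'b : a' ≠ b) (ha'b' : a' ≠ b') (i : ι) : Function.Injective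
      ![P.center i, P.leaf i 1, a', a, P.leaf i 0, b, b', P.leaf i 2] := by
  rw [← List.nodup_ofFn]
  simp [List.ofFn_succ, P.center_ne_leaf, P.leaf_injective.eq_iff, P.ne_leaf ha.1, P.ne_leaf ha.2.1,
    (P.ne_leaf ha.1 i _).symm, (P.ne_leaf ha.2.1 i _).symm, P.ne_leaf hb.1, P.ne_leaf hb.2.1,
    (P.ne_leaf hb.1 i _).symm, (P.ne_leaf hb.2.1 i _).symm, (P.ne_center ha.1 i).symm,
    (P.ne_center ha.2.1 i).symm, (P.ne_center hb.1 i).symm, (P.ne_center hb.2.1 i).symm,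
    ha.2.2.ne.symm, hb.2.2.ne, hab, hab', ha'b, ha'b']

variable [Finite V] [Nonempty ι] [Finite ι]

theorem IsSaturated.nonempty_iso_graphB2 (hP : P.IsSaturated) (hG : NTDExtremal G)
    (ha : P.Mates a a') (h0 : P.leafNbhd i 0 = {a}) (h1 : P.leafNbhd i 1 = {a'})
    (h2 : P.leafNbhd i 2 = {a}) : Nonempty (G ≃g graphB2) := by
  have haa' := ha.2.2.ne
  refine nonempty_iso_of_neighborSet_eq hG.connected
    (f := ![P.leaf i 0, P.center i, P.leaf i 1, a', a, P.leaf i 2]) ?_ fun j ↦ ?_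
  · rw [← List.nodup_ofFn]
    simp [List.ofFn_succ, P.center_ne_leaf, (P.center_ne_leaf i i _).symm, P.leaf_injective.eq_iff,
      P.ne_leaf ha.1, P.ne_leaf ha.2.1, (P.ne_leaf ha.1 i _).symm, (P.ne_leaf ha.2.1 i _).symm,
      (P.ne_center ha.1 i).symm, (P.ne_center ha.2.1 i).symm, haa'.symm]
  · rw [neighborSet_graphB2]
    ext v
    fin_cases j <;>
      simp [neighborSet_leaf, hP.neighborSet_center hG, hP.neighborSet_of_mates hG ha i,
        hP.neighborSet_of_mates hG ha.symm i, h0, h1, h2, haa', haa'.symm, Fin.exists_fin_succ,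
        @eq_comm _ v] <;>
      tauto

theorem IsSaturated.ne_of_mates_of_mem_leafNbhd (hP : P.IsSaturated) (hG : NTDExtremal G)
    (ha : P.Mates a a') (hb : P.Mates b b') (hab : a ≠ b) {k : Fin 3}
    (hak : a ∈ P.leafNbhd i k) (hbk : b ∈ P.leafNbhd i k) : a ≠ b' ∧ a' ≠ b ∧ a' ≠ b' := by
  refine ⟨?_, ?_, ?_⟩ <;> rintro rfl
  · exact hP.notMem_leafNbhd_of_mates hG hb hbk hak
  · exact hP.notMem_leafNbhd_of_mates hG ha hak hbk
  · exact hab (hP.mates_right_unique hG ha.symm hb.symm)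

theorem IsSaturated.nonempty_iso_graphB4 (hP : P.IsSaturated) (hG : NTDExtremal G)
    (ha : P.Mates a a') (hb : P.Mates b b') (hab : a ≠ b) (h0 : P.leafNbhd i 0 = {a, b})
    (h1 : P.leafNbhd i 1 = {a'}) (h2 : P.leafNbhd i 2 = {b'}) : Nonempty (G ≃g graphB4) := by
  obtain ⟨hab', ha'b, ha'b'⟩ :=
    hP.ne_of_mates_of_mem_leafNbhd hG ha hb hab (k := 0) (i := i) (by simp [h0]) (by simp [h0])
  refine nonempty_iso_of_neighborSet_eq hG.connected
    (injective_vec_of_mates ha hb hab hab' ha'b ha'b' i) fun j ↦ ?_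
  rw [neighborSet_graphB4]
  ext v
  fin_cases j <;>
    simp [neighborSet_leaf, hP.neighborSet_center hG, hP.neighborSet_of_mates hG ha i,
      hP.neighborSet_of_mates hG ha.symm i, hP.neighborSet_of_mates hG hb i,
      hP.neighborSet_of_mates hG hb.symm i, h0, h1, h2, ha.2.2.ne, ha.2.2.ne.symm, hb.2.2.ne,
      hb.2.2.ne.symm, hab, hab', ha'b, ha'b', hab.symm, hab'.symm, ha'b.symm, ha'b'.symm,
      Fin.exists_fin_succ, @eq_comm _ v] <;>
    tauto

theorem IsSaturated.nonempty_iso_graphB5 (hP : P.IsSaturated) (hG : NTDExtremal G)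
    (ha : P.Mates a a') (hb : P.Mates b b') (hab : a ≠ b) (h0 : P.leafNbhd i 0 = {a, b})
    (h1 : P.leafNbhd i 1 = {a', b}) (h2 : P.leafNbhd i 2 = {b'}) : Nonempty (G ≃g graphB5) := by
  obtain ⟨hab', ha'b, ha'b'⟩ :=
    hP.ne_of_mates_of_mem_leafNbhd hG ha hb hab (k := 0) (i := i) (by simp [h0]) (by simp [h0])
  refine nonempty_iso_of_neighborSet_eq hG.connected
    (injective_vec_of_mates ha hb hab hab' ha'b ha'b' i) fun j ↦ ?_
  rw [neighborSet_graphB5]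
  ext v
  fin_cases j <;>
    simp [neighborSet_leaf, hP.neighborSet_center hG, hP.neighborSet_of_mates hG ha i,
      hP.neighborSet_of_mates hG ha.symm i, hP.neighborSet_of_mates hG hb i,
      hP.neighborSet_of_mates hG hb.symm i, h0, h1, h2, ha.2.2.ne, ha.2.2.ne.symm, hb.2.2.ne,
      hb.2.2.ne.symm, hab, hab', ha'b, ha'b', hab.symm, hab'.symm, ha'b.symm, ha'b'.symm,
      Fin.exists_fin_succ, @eq_comm _ v] <;>
    tauto

theorem IsSaturated.mem_leafNbhd_two (hP : P.IsSaturated) (hG : NTDExtremal G)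
    (ha : P.Mates a a') (hb : P.Mates b b') (hab : a ≠ b) (ha0 : a ∈ P.leafNbhd i 0)
    (hb0 : b ∈ P.leafNbhd i 0) (ha1 : a' ∈ P.leafNbhd i 1) : b' ∈ P.leafNbhd i 2 := by
  obtain ⟨-, -, ha'b'⟩ := hP.ne_of_mates_of_mem_leafNbhd hG ha hb hab ha0 hb0
  by_contra hb2
  obtain ⟨y, hy⟩ := P.leafNbhd_nonempty hG i 2
  have ha2 : a ∈ P.leafNbhd i 2 := by
    obtain rfl | rfl := hP.leafNbhd_subset_pair hG (by decide) (by decide) (by decide) hb ha.symm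
      hb0 ha1 ha'b' hy
    exacts [absurd hy hb2, hy]
  have hb1 : b' ∈ P.leafNbhd i 1 := by
    obtain ⟨k, hk⟩ := hP.exists_mem_leafNbhd hG hb.2.1 i
    fin_cases k
    exacts [absurd hk (hP.notMem_leafNbhd_of_mates hG hb hb0), hk, absurd hk hb2]
  obtain h | h := hP.leafNbhd_subset_pair hG (by decide) (by decide) (by decide) ha hb.symm ha0 hb1
    ha'b'.symm ha2
  exacts [ha.2.2.ne h, hab h]

theorem IsSaturated.nonempty_iso_graphB4_or_graphB5 (hP : P.IsSaturated) (hG : NTDExtremal G)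
    (ha : P.Mates a a') (hab : a ≠ b) (ha0 : a ∈ P.leafNbhd i 0) (hb0 : b ∈ P.leafNbhd i 0)
    (ha1 : a' ∈ P.leafNbhd i 1) : Nonempty (G ≃g graphB4) ∨ Nonempty (G ≃g graphB5) := by
  obtain ⟨b', hb⟩ := hP.exists_mates hG (hP.notMem_support_of_mem_leafNbhd hG hb0)
  have hb2 := hP.mem_leafNbhd_two hG ha hb hab ha0 hb0 ha1
  obtain ⟨hab', ha'b, ha'b'⟩ := hP.ne_of_mates_of_mem_leafNbhd hG ha hb hab ha0 hb0
  have h0 : P.leafNbhd i 0 = {a, b} := (hP.leafNbhd_subset_pair hG (by decide) (by decide)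
    (by decide) ha.symm hb.symm ha1 hb2 hab'.symm).antisymm (Set.pair_subset ha0 hb0)
  have h1 : P.leafNbhd i 1 ⊆ {a', b} := hP.leafNbhd_subset_pair hG (by decide) (by decide)
    (by decide) ha hb.symm ha0 hb2 ha'b'.symm
  have h2 : P.leafNbhd i 2 ⊆ {b', a} := hP.leafNbhd_subset_pair hG (by decide) (by decide)
    (by decide) hb ha.symm hb0 ha1 ha'b'
  have h1' (hb1 : b ∉ P.leafNbhd i 1) : P.leafNbhd i 1 = {a'} := Set.eq_singleton_iff_unique_mem.2
    ⟨ha1, fun y hy ↦ (h1 hy).resolve_right (ne_of_mem_of_not_mem hy hb1)⟩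
  have h2' (ha2 : a ∉ P.leafNbhd i 2) : P.leafNbhd i 2 = {b'} := Set.eq_singleton_iff_unique_mem.2
    ⟨hb2, fun y hy ↦ (h2 hy).resolve_right (ne_of_mem_of_not_mem hy ha2)⟩
  by_cases hb1 : b ∈ P.leafNbhd i 1 <;> by_cases ha2 : a ∈ P.leafNbhd i 2
  · obtain h | h := hP.leafNbhd_subset_pair hG (by decide) (by decide) (by decide) ha hb ha0 hb1
      ha'b.symm ha2
    exacts [absurd h ha.2.2.ne, absurd h hab']
  · exact .inr (hP.nonempty_iso_graphB5 hG ha hb hab h0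
      (h1.antisymm (Set.pair_subset ha1 hb1)) (h2' ha2))
  · exact .inr ((hP.permute (Equiv.swap 1 2)).nonempty_iso_graphB5 hG ((mates_permute _).2 hb)
      ((mates_permute _).2 ha) hab.symm (h0.trans (Set.pair_comm a b))
      (h2.antisymm (Set.pair_subset hb2 ha2)) (h1' hb1))
  · exact .inl (hP.nonempty_iso_graphB4 hG ha hb hab h0 (h1' hb1) (h2' ha2))

theorem IsSaturated.nonempty_iso_graphB2_of_eq_singleton (hP : P.IsSaturated)
    (hG : NTDExtremal G) (ha : P.Mates a a') (h0 : P.leafNbhd i 0 = {a})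
    (h1 : P.leafNbhd i 1 = {a'}) : Nonempty (G ≃g graphB2) := by
  have hsub : P.leafNbhd i 2 ⊆ {a, a'} := by
    intro y hy
    obtain ⟨w, hw⟩ := hP.exists_mates hG (hP.notMem_support_of_mem_leafNbhd hG hy)
    obtain ⟨k, hk⟩ := hP.exists_mem_leafNbhd hG hw.2.1 i
    fin_cases k
    · obtain rfl : w = a := h0.le hk
      exact .inr (hP.mates_right_unique hG hw.symm ha)
    · obtain rfl : w = a' := h1.le hk
      exact .inl (hP.mates_right_unique hG hw.symm ha.symm)
    · exact absurd hk (hP.notMem_leafNbhd_of_mates hG hw hy)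
  obtain ⟨y, hy⟩ := P.leafNbhd_nonempty hG i 2
  obtain rfl | rfl := hsub hy
  · have h2 : P.leafNbhd i 2 = {y} := Set.eq_singleton_iff_unique_mem.2 ⟨hy, fun z hz ↦
      (hsub hz).resolve_right (ne_of_mem_of_not_mem hz (hP.notMem_leafNbhd_of_mates hG ha hy))⟩
    exact hP.nonempty_iso_graphB2 hG ha h0 h1 h2
  · have h2 : P.leafNbhd i 2 = {y} := Set.eq_singleton_iff_unique_mem.2 ⟨hy, fun z hz ↦
      (hsub hz).resolve_left
        (ne_of_mem_of_not_mem hz (hP.notMem_leafNbhd_of_mates hG ha.symm hy))⟩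
    exact (hP.permute (Equiv.swap 0 1)).nonempty_iso_graphB2 hG ((mates_permute _).2 ha.symm)
      h1 h0 h2

theorem IsSaturated.nonempty_iso_of_mates (hP : P.IsSaturated) (hG : NTDExtremal G)
    (ha : P.Mates a a') (ha0 : a ∈ P.leafNbhd i 0) (ha1 : a' ∈ P.leafNbhd i 1) :
    Nonempty (G ≃g graphB2) ∨ Nonempty (G ≃g graphB4) ∨ Nonempty (G ≃g graphB5) := by
  by_cases h0 : ∃ b ∈ P.leafNbhd i 0, a ≠ b
  · obtain ⟨b, hb, hab⟩ := h0
    exact .inr (hP.nonempty_iso_graphB4_or_graphB5 hG ha hab ha0 hb ha1)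
  by_cases h1 : ∃ b ∈ P.leafNbhd i 1, a' ≠ b
  · obtain ⟨b, hb, hab⟩ := h1
    exact .inr ((hP.permute (Equiv.swap 0 1)).nonempty_iso_graphB4_or_graphB5 hG
      ((mates_permute _).2 ha.symm) hab ha1 hb ha0)
  push Not at h0 h1
  exact .inl (hP.nonempty_iso_graphB2_of_eq_singleton hG ha
    (Set.eq_singleton_iff_unique_mem.2 ⟨ha0, fun b hb ↦ (h0 b hb).symm⟩)
    (Set.eq_singleton_iff_unique_mem.2 ⟨ha1, fun b hb ↦ (h1 b hb).symm⟩))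

theorem IsSaturated.nonempty_iso (hP : P.IsSaturated) (hG : NTDExtremal G) :
    Nonempty (G ≃g graphB2) ∨ Nonempty (G ≃g graphB4) ∨ Nonempty (G ≃g graphB5) := by
  obtain ⟨i⟩ := ‹Nonempty ι›
  choose y hy using fun k ↦ P.leafNbhd_nonempty hG i k
  obtain ⟨k, l, h⟩ := hP.exists_mates_of_mem_leafNbhd hG hy
  have hkl : k ≠ l := fun hkl ↦ h.2.2.ne (congrArg y hkl)
  have hperm : ∀ k l : Fin 3, k ≠ l → ∃ σ : Equiv.Perm (Fin 3), σ 0 = k ∧ σ 1 = l := by decide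
  obtain ⟨σ, rfl, rfl⟩ := hperm k l hkl
  exact (hP.permute σ).nonempty_iso_of_mates hG ((mates_permute σ).2 h) (hy _) (hy _)

end Attachments

end ClawPacking

theorem ClawPacking.IsSaturated.ncard_neighborSet_le_two {G : SimpleGraph V} {ι : Type*} [IsEmpty ι]
    {P : ClawPacking G ι} (hP : P.IsSaturated) (v : V) : (G.neighborSet v).ncard ≤ 2 := by
  have hout (w : V) : w ∉ P.support := fun hw ↦ isEmptyElim (P.mem_claws.1 hw).choose
  have himage : G.neighborSet v =
      Subtype.val '' (G.induce P.supportᶜ).neighborSet ⟨v, hout v⟩ := by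
    ext w
    exact ⟨fun hw ↦ ⟨⟨w, hout w⟩, hw, rfl⟩, fun ⟨_, hw, h⟩ ↦ h ▸ hw⟩
  rw [himage, Set.ncard_image_of_injective _ Subtype.val_injective]
  exact hP _

theorem ncard_neighborSet (G : SimpleGraph V) (v : V) [Fintype (G.neighborSet v)] :
    (G.neighborSet v).ncard = G.degree v := by
  rw [Set.ncard_eq_toFinset_card', ← neighborFinset_def, card_neighborFinset_eq_degree]

theorem stmt7_general [Fintype V] (G : SimpleGraph V) [DecidableRel G.Adj]
    (hconn : G.Connected) (hdeg : ∀ v, 2 ≤ G.degree v) (hC5 : ¬Nonempty (G ≃g cycleGraph 5))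
    (h : Fintype.card V ≤ 2 * ntdNum G) :
    Nonempty (G ≃g cycleGraph 4) ∨ Nonempty (G ≃g graphB2) ∨ Nonempty (G ≃g cycleGraph 8) ∨
      Nonempty (G ≃g graphB4) ∨ Nonempty (G ≃g graphB5) := by
  have hG : NTDExtremal G := ⟨hconn, fun v ↦ (hdeg v).trans_eq (ncard_neighborSet G v).symm,
    Nat.card_eq_fintype_card.trans_le h⟩
  obtain ⟨m, P, hP⟩ := exists_clawPacking_isSaturated G
  obtain rfl | hm := m.eq_zero_or_pos
  · obtain h4 | h5 | h8 := hG.nonempty_iso_cycleGraph hP.ncard_neighborSet_le_two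
    exacts [.inl h4, absurd h5 hC5, .inr (.inr (.inl h8))]
  · have : Nonempty (Fin m) := ⟨⟨0, hm⟩⟩
    obtain h2 | h4 | h5 := hP.nonempty_iso hG
    exacts [.inr (.inl h2), .inr (.inr (.inr (.inl h4))), .inr (.inr (.inr (.inr h5)))]

theorem stmt7 [Fintype V] (G : SimpleGraph V) [DecidableRel G.Adj]
    (hconn : G.Connected) (hn : 4 ≤ Fintype.card V)
    (hdeg : ∀ v : V, 2 ≤ G.degree v)
    (hC5 : ¬ Nonempty (G ≃g cycleGraph 5))
    (h : 2 * ntdNum G = Fintype.card V) :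
    Nonempty (G ≃g cycleGraph 4) ∨ Nonempty (G ≃g graphB2) ∨
    Nonempty (G ≃g cycleGraph 8) ∨ Nonempty (G ≃g graphB4) ∨
    Nonempty (G ≃g graphB5) := by
  exact stmt7_general G hconn hdeg hC5 h.ge
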